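/- arXiv:2504.16876 — 4 statements merged into one kernel-verified Lean document; each statement's English description precedes it below -/
import Mathlib

section
/- Let (x̂, ŷ) be a saddle point of L(x,y) = g(x) + ⟨Kx,y⟩ − h(y), let τ, σ > 0, and let x^{md}, x̄ ∈ X and y^{md} ∈ Y. If u = Prox_{τg}(x^{md} − τK^Tv) and v = Prox_{σh}(y^{md} + σKx̄), then G_{x̂,ŷ}(u, v) + ⟨K(u − x̄), v − ŷ⟩ + ‖u − x^{md}‖²/(2τ) + ‖u − x̂‖²/(2τ) + ‖v − y^{md}‖²/(2σ) + ‖v − ŷ‖²/(2σ) ≤ ‖x^{md} − x̂‖²/(2τ) + ‖y^{md} − ŷ‖²/(2σ). -/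
open scoped RealInnerProductSpace

/-- `z` is the minimizer of `u ↦ h u + ‖u - x‖² / (2τ)`, i.e. `z = Prox_{τh}(x)`. -/
def IsProx {X : Type*} [NormedAddCommGroup X] [InnerProductSpace ℝ X]
    (τ : ℝ) (h : X → ℝ) (x z : X) : Prop :=
  ∀ u : X, h z + ‖z - x‖ ^ 2 / (2 * τ) ≤ h u + ‖u - x‖ ^ 2 / (2 * τ)

/-- `(xh, yh)` is a saddle point of `L(x,y) = g x + ⟪K x, y⟫ - h y`. -/
def IsSaddlePoint {X Y : Type*}
    [NormedAddCommGroup X] [InnerProductSpace ℝ X]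
    [NormedAddCommGroup Y] [InnerProductSpace ℝ Y]
    (g : X → ℝ) (h : Y → ℝ) (K : X →L[ℝ] Y) (xh : X) (yh : Y) : Prop :=
  ∀ x : X, ∀ y : Y,
    g xh + ⟪K xh, y⟫ - h y ≤ g xh + ⟪K xh, yh⟫ - h yh ∧
    g xh + ⟪K xh, yh⟫ - h yh ≤ g x + ⟪K x, yh⟫ - h yh

/-- The primal-dual gap `G_{xh,yh}(x,y)` at a saddle point `(xh, yh)`. -/
noncomputable def pdGap {X Y : Type*}
    [NormedAddCommGroup X] [InnerProductSpace ℝ X] [FiniteDimensional ℝ X]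
    [NormedAddCommGroup Y] [InnerProductSpace ℝ Y] [FiniteDimensional ℝ Y]
    (g : X → ℝ) (h : Y → ℝ) (K : X →L[ℝ] Y) (xh : X) (yh : Y) (x : X) (y : Y) : ℝ :=
  (g x - g xh + ⟪(ContinuousLinearMap.adjoint K) yh, x - xh⟫) +
  (h y - h yh - ⟪K xh, y - yh⟫)

/-!
The two proximal steps are proximal steps of the saddle function itself: `u` is the proximal point
of `L(·, v)` at `xmd`, and `v` is the proximal point of `-L(xbar, ·)` at `ymd`. A proximal point
minimizes a strongly convex function, so the minimum is exceeded at any other point by at least the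
quadratic modulus. Adding the two resulting inequalities gives the estimate, because
`L(u, yh) - L(xh, v) + ⟪K (u - xbar), v - yh⟫ =
  (L(u, v) - L(xh, v)) + (L(xbar, yh) - L(xbar, v))`.
-/

section StrongConvexity

open Filter Topology

theorem add_modulus_le_of_uniformConvexOn_of_isMinOn {E : Type*} [NormedAddCommGroup E]
    [NormedSpace ℝ E] {s : Set E} {ω : ℝ → ℝ} {f : E → ℝ} {z p : E} (hf : UniformConvexOn s ω f)
    (hmin : IsMinOn f s z) (hz : z ∈ s) (hp : p ∈ s) : f z + ω ‖z - p‖ ≤ f p := by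
  have scaled_growth : ∀ t ∈ Set.Ioo (0 : ℝ) 1, f z + (1 - t) * ω ‖z - p‖ ≤ f p := by
    rintro t ⟨t_pos, t_lt_one⟩
    have one_sub_nonneg : 0 ≤ 1 - t := sub_nonneg.2 t_lt_one.le
    have min_le : f z ≤ f ((1 - t) • z + t • p) :=
      hmin (hf.1 hz hp one_sub_nonneg t_pos.le (sub_add_cancel 1 t))
    have convex_le : f ((1 - t) • z + t • p) ≤
        (1 - t) * f z + t * f p - (1 - t) * t * ω ‖z - p‖ :=
      hf.2 hz hp one_sub_nonneg t_pos.le (sub_add_cancel 1 t)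
    refine le_of_mul_le_mul_left ?_ t_pos
    linarith
  have tendsto_growth : Tendsto (fun t : ℝ ↦ f z + (1 - t) * ω ‖z - p‖) (𝓝[>] 0)
      (𝓝 (f z + ω ‖z - p‖)) := by
    refine Tendsto.mono_left (Continuous.tendsto' (by fun_prop) _ _ ?_) nhdsWithin_le_nhds
    simp
  refine le_of_tendsto tendsto_growth ?_
  filter_upwards [Ioo_mem_nhdsGT one_pos] with t ht using scaled_growth t ht

theorem strongConvexOn_half_mul_norm_sub_sq {E : Type*} [NormedAddCommGroup E]
    [InnerProductSpace ℝ E] {s : Set E} (hs : Convex ℝ s) (m : ℝ) (w : E) :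
    StrongConvexOn s m (fun x ↦ m / 2 * ‖x - w‖ ^ 2) := by
  have expand : (fun x ↦ m / 2 * ‖x - w‖ ^ 2 - m / 2 * ‖x‖ ^ 2) =
      fun x ↦ innerₗ E (-m • w) x + m / 2 * ‖w‖ ^ 2 := by
    funext x
    rw [norm_sub_sq_real, innerₗ_apply_apply, real_inner_smul_left, real_inner_comm]
    ring
  rw [strongConvexOn_iff_convex, expand]
  exact ((innerₗ E (-m • w)).convexOn hs).add_const _

end StrongConvexity

section Prox

variable {E : Type*} [NormedAddCommGroup E] [InnerProductSpace ℝ E] {τ : ℝ} {f : E → ℝ}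

theorem IsProx.add_norm_sub_sq_le {w z : E} (hz : IsProx τ f w z) (hf : ConvexOn ℝ Set.univ f)
    (p : E) :
    f z + ‖z - w‖ ^ 2 / (2 * τ) + ‖z - p‖ ^ 2 / (2 * τ) ≤ f p + ‖w - p‖ ^ 2 / (2 * τ) := by
  have half_inv_mul (r : ℝ) : τ⁻¹ / 2 * r = r / (2 * τ) := by ring
  have hmin : IsMinOn (f + fun x ↦ τ⁻¹ / 2 * ‖x - w‖ ^ 2) Set.univ z := by
    intro x _
    simpa only [Set.mem_ofPred_eq, Pi.add_apply, half_inv_mul] using hz x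
  have growth := add_modulus_le_of_uniformConvexOn_of_isMinOn
    (hf.uniformConvexOn_zero.add (strongConvexOn_half_mul_norm_sub_sq convex_univ τ⁻¹ w))
    hmin (Set.mem_univ z) (Set.mem_univ p)
  simpa only [Pi.add_apply, Pi.zero_apply, zero_add, half_inv_mul, norm_sub_rev p w] using growth

theorem isProx_sub_smul_iff_isProx_add_inner (hτ : τ ≠ 0) (w c z : E) (b : ℝ) :
    IsProx τ f (w - τ • c) z ↔ IsProx τ (fun x ↦ f x + ⟪c, x⟫ + b) w z := by
  have complete_square (x : E) : ‖x - (w - τ • c)‖ ^ 2 / (2 * τ) =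
      ‖x - w‖ ^ 2 / (2 * τ) + ⟪c, x⟫ + (τ * ‖c‖ ^ 2 / 2 - ⟪c, w⟫) := by
    rw [sub_sub_eq_add_sub, add_sub_right_comm, norm_add_sq_real, real_inner_smul_right,
      real_inner_comm, inner_sub_right, norm_smul, mul_pow, Real.norm_eq_abs, sq_abs]
    field_simp
    ring
  refine forall_congr' fun x ↦ ?_
  rw [complete_square, complete_square]
  constructor <;> intro h <;> linarith

end Prox

section SaddleFunction

variable {X Y : Type*} [NormedAddCommGroup X] [InnerProductSpace ℝ X]
  [NormedAddCommGroup Y] [InnerProductSpace ℝ Y] {g : X → ℝ} {h : Y → ℝ}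

/-- The saddle function `L(x, y) = g x + ⟪K x, y⟫ - h y`. The primal-dual gap is a difference of
two of its values (`pdGap_eq_saddleFunction_sub`), which makes sense without finite dimension. -/
noncomputable def saddleFunction (g : X → ℝ) (h : Y → ℝ) (K : X →L[ℝ] Y) (x : X) (y : Y) : ℝ :=
  g x + ⟪K x, y⟫ - h y

theorem pdGap_eq_saddleFunction_sub [FiniteDimensional ℝ X] [FiniteDimensional ℝ Y]
    (g : X → ℝ) (h : Y → ℝ) (K : X →L[ℝ] Y) (xh x : X) (yh y : Y) :
    pdGap g h K xh yh x y = saddleFunction g h K x yh - saddleFunction g h K xh y := by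
  rw [pdGap, saddleFunction, saddleFunction, ContinuousLinearMap.adjoint_inner_left,
    real_inner_comm, map_sub, inner_sub_left, inner_sub_right]
  ring

theorem saddleFunction_sub_add_inner (g : X → ℝ) (h : Y → ℝ) (K : X →L[ℝ] Y)
    (x u xbar : X) (y v : Y) :
    saddleFunction g h K u y - saddleFunction g h K x v + ⟪K (u - xbar), v - y⟫ =
      (saddleFunction g h K u v - saddleFunction g h K x v) +
        (saddleFunction g h K xbar y - saddleFunction g h K xbar v) := by
  simp only [saddleFunction, map_sub, inner_sub_left, inner_sub_right]
  ring

theorem convexOn_saddleFunction_left {s : Set X} (hg : ConvexOn ℝ s g) (h : Y → ℝ)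
    (K : X →L[ℝ] Y) (y : Y) : ConvexOn ℝ s (fun x ↦ saddleFunction g h K x y) := by
  have inner_convex : ConvexOn ℝ s (fun x ↦ ⟪K x, y⟫) :=
    ((innerₗ Y).flip y ∘ₗ K.toLinearMap).convexOn hg.1
  exact (hg.add inner_convex).sub (concaveOn_const (h y) hg.1)

theorem concaveOn_saddleFunction_right {s : Set Y} (hh : ConvexOn ℝ s h) (g : X → ℝ)
    (K : X →L[ℝ] Y) (x : X) : ConcaveOn ℝ s (saddleFunction g h K x) := by
  have inner_concave : ConcaveOn ℝ s (fun y ↦ g x + ⟪K x, y⟫) :=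
    (concaveOn_const (g x) hh.1).add ((innerₗ Y (K x)).concaveOn hh.1)
  exact inner_concave.sub hh

theorem isProx_sub_smul_adjoint_iff_isProx_saddleFunction [CompleteSpace X] [CompleteSpace Y]
    {τ : ℝ} (hτ : τ ≠ 0) (g : X → ℝ) (h : Y → ℝ) (K : X →L[ℝ] Y) (w u : X) (v : Y) :
    IsProx τ g (w - τ • ContinuousLinearMap.adjoint K v) u ↔
      IsProx τ (fun x ↦ saddleFunction g h K x v) w u := by
  rw [isProx_sub_smul_iff_isProx_add_inner hτ _ _ _ (-h v)]
  simp only [saddleFunction, ContinuousLinearMap.adjoint_inner_left, real_inner_comm v,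
    sub_eq_add_neg]

theorem isProx_add_smul_iff_isProx_neg_saddleFunction {σ : ℝ} (hσ : σ ≠ 0) (g : X → ℝ)
    (h : Y → ℝ) (K : X →L[ℝ] Y) (x : X) (w v : Y) :
    IsProx σ h (w + σ • K x) v ↔ IsProx σ (-saddleFunction g h K x) w v := by
  have neg_saddleFunction :
      -saddleFunction g h K x = fun y ↦ h y + ⟪-K x, y⟫ + -g x := by
    funext y
    rw [Pi.neg_apply, saddleFunction, inner_neg_left]
    ring
  rw [neg_saddleFunction, ← isProx_sub_smul_iff_isProx_add_inner hσ, smul_neg, sub_neg_eq_add]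

end SaddleFunction

theorem one_step_gap_estimate_general
    {X Y : Type*}
    [NormedAddCommGroup X] [InnerProductSpace ℝ X] [CompleteSpace X]
    [NormedAddCommGroup Y] [InnerProductSpace ℝ Y] [CompleteSpace Y]
    {g : X → ℝ} {h : Y → ℝ} {K : X →L[ℝ] Y}
    (hg : ConvexOn ℝ Set.univ g) (hh : ConvexOn ℝ Set.univ h)
    {τ σ : ℝ} (hτ : τ ≠ 0) (hσ : σ ≠ 0)
    {xmd xbar : X} {ymd : Y} {u : X} {v : Y}
    (hu : IsProx τ g (xmd - τ • (ContinuousLinearMap.adjoint K) v) u)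
    (hv : IsProx σ h (ymd + σ • K xbar) v) (x : X) (y : Y) :
    saddleFunction g h K u y - saddleFunction g h K x v + ⟪K (u - xbar), v - y⟫ +
        ‖u - xmd‖ ^ 2 / (2 * τ) + ‖u - x‖ ^ 2 / (2 * τ) +
        ‖v - ymd‖ ^ 2 / (2 * σ) + ‖v - y‖ ^ 2 / (2 * σ) ≤
      ‖xmd - x‖ ^ 2 / (2 * τ) + ‖ymd - y‖ ^ 2 / (2 * σ) := by
  have primal_step :=
    ((isProx_sub_smul_adjoint_iff_isProx_saddleFunction hτ g h K xmd u v).1 hu).add_norm_sub_sq_le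
      (convexOn_saddleFunction_left hg h K v) x
  have dual_step :=
    ((isProx_add_smul_iff_isProx_neg_saddleFunction hσ g h K xbar ymd v).1 hv).add_norm_sub_sq_le
      (concaveOn_saddleFunction_right hh g K xbar).neg y
  simp only [Pi.neg_apply] at dual_step
  rw [saddleFunction_sub_add_inner]
  linarith

/-- One-step estimate (inequality (14) of the paper): if
`u = Prox_{τg}(xmd - τ K^T v)` and `v = Prox_{σh}(ymd + σ K xbar)`, then
`G(u,v) + ⟨K(u - xbar), v - yh⟩ + ‖u - xmd‖²/(2τ) + ‖u - xh‖²/(2τ)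
 + ‖v - ymd‖²/(2σ) + ‖v - yh‖²/(2σ) ≤ ‖xmd - xh‖²/(2τ) + ‖ymd - yh‖²/(2σ)`. -/
theorem one_step_gap_estimate
    {X Y : Type*}
    [NormedAddCommGroup X] [InnerProductSpace ℝ X] [FiniteDimensional ℝ X]
    [NormedAddCommGroup Y] [InnerProductSpace ℝ Y] [FiniteDimensional ℝ Y]
    (g : X → ℝ) (h : Y → ℝ) (K : X →L[ℝ] Y)
    (hg : ConvexOn ℝ Set.univ g) (hgc : Continuous g)
    (hh : ConvexOn ℝ Set.univ h) (hhc : Continuous h)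
    (xh : X) (yh : Y) (hsad : IsSaddlePoint g h K xh yh)
    (τ σ : ℝ) (hτ : 0 < τ) (hσ : 0 < σ)
    (xmd xbar : X) (ymd : Y) (u : X) (v : Y)
    (hu : IsProx τ g (xmd - τ • (ContinuousLinearMap.adjoint K) v) u)
    (hv : IsProx σ h (ymd + σ • K xbar) v) :
    pdGap g h K xh yh u v + ⟪K (u - xbar), v - yh⟫ +
        ‖u - xmd‖ ^ 2 / (2 * τ) + ‖u - xh‖ ^ 2 / (2 * τ) +
        ‖v - ymd‖ ^ 2 / (2 * σ) + ‖v - yh‖ ^ 2 / (2 * σ) ≤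
      ‖xmd - xh‖ ^ 2 / (2 * τ) + ‖ymd - yh‖ ^ 2 / (2 * σ) := by
  rw [pdGap_eq_saddleFunction_sub]
  exact one_step_gap_estimate_general hg hh hτ.ne' hσ.ne' hu hv xh yh
end

section
/- (Theorem 3.1, global convergence of NPDA) Let {(x_k, y_k)} be generated by the NPDA iteration and suppose the saddle problem min_x max_y g(x) + ⟨Kx,y⟩ − h(y) admits a saddle point. Then the sequence {(x_k, y_k)} converges to a saddle point (x*, y*) of the problem. -/
open scoped RealInnerProductSpace

/-!
For every saddle point, a weighted sum of the squared distances from it of the iterates and of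
their averages is a Lyapunov function: once divided by `(1 - a k) (1 - b k)` it decreases, by at
least a multiple of `‖x (k + 1) - x k‖² + ‖y (k + 1) - y k‖² + a k ‖x k - xag k‖² +
b k ‖y k - yag k‖²`. Hence the iterates are bounded and their cluster points are saddle points.

The classical Opial argument does not conclude from here, because `a k` and `b k` may tend to `0`
and then nothing forces `x k - xag k → 0`: convergence of the Lyapunov function is not convergence
of the distance to the saddle point. But an average either stays away from its sequence, and then
has finite length and converges, so that its term can be dropped; or it catches up with its sequence
again and again while moving arbitrarily little in between. In the second case there are times at
which both averages agree with the iterates, and at a cluster point along those times the Lyapunov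
function tends to `0`.
-/

open Filter Topology Bornology

section Averages

variable {E : Type*} [NormedAddCommGroup E] {u U : ℕ → E} {a : ℕ → ℝ}

/-- The sequence `U` catches up with `u`: from time `n` one can move on to a time `t n` at which
the two sequences agree, without `U` having moved in between, up to errors that vanish as
`n → ∞`. -/
def CatchesUp (u U : ℕ → E) : Prop :=
  ∃ t : ℕ → ℕ, Tendsto t atTop atTop ∧ Tendsto (fun n => U (t n) - U n) atTop (𝓝 0) ∧
    Tendsto (fun n => u (t n) - U (t n)) atTop (𝓝 0)

lemma CatchesUp.refl (u : ℕ → E) : CatchesUp u u :=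
  ⟨id, tendsto_id, by simp, by simp⟩

/- If `U` converges, then so does its distance term, which can be dropped by taking weight `0`. -/
lemma exists_catchesUp_of_tendsto_or_catchesUp {α : ℕ → ℝ} (hu : IsBounded (Set.range u))
    (hUb : IsBounded (Set.range U)) (hα : ∀ k, 0 ≤ α k) (hαlim : ∃ l, Tendsto α atTop (𝓝 l))
    (h : (∃ L, Tendsto U atTop (𝓝 L)) ∨ CatchesUp u U) :
    ∃ (U' : ℕ → E) (α' : ℕ → ℝ), CatchesUp u U' ∧ IsBounded (Set.range U') ∧ (∀ k, 0 ≤ α' k) ∧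
      (∃ l, Tendsto α' atTop (𝓝 l)) ∧
      ∀ p, ∃ l, Tendsto (fun k => α k * ‖U k - p‖ ^ 2 - α' k * ‖U' k - p‖ ^ 2) atTop (𝓝 l) := by
  obtain ⟨L, hL⟩ | hcatch := h
  · obtain ⟨l, hl⟩ := hαlim
    refine ⟨u, 0, .refl u, hu, fun _ => le_rfl, ⟨0, tendsto_const_nhds⟩, fun p => ?_⟩
    exact ⟨l * ‖L - p‖ ^ 2, by simpa using hl.mul ((hL.sub_const p).norm.pow 2)⟩
  · exact ⟨U, α, hcatch, hUb, hα, hαlim, fun p => ⟨0, by simp⟩⟩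

variable [NormedSpace ℝ E]

lemma dist_average_succ_le {η : ℝ} {k : ℕ} (hη : 0 < η) (ha : 0 ≤ a k)
    (hU : U (k + 1) = (1 - a k) • U k + a k • u k) (hk : η ≤ ‖u k - U k‖) :
    dist (U k) (U (k + 1)) ≤ a k * ‖u k - U k‖ ^ 2 / η := by
  have increment : U (k + 1) - U k = a k • (u k - U k) := by rw [hU]; module
  rw [dist_comm, dist_eq_norm, increment, norm_smul, Real.norm_of_nonneg ha, le_div_iff₀ hη]
  calc a k * ‖u k - U k‖ * η ≤ a k * ‖u k - U k‖ * ‖u k - U k‖ := by gcongr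
    _ = a k * ‖u k - U k‖ ^ 2 := by ring

lemma dist_average_le_tsum_div {η : ℝ} {s t : ℕ} (hη : 0 < η) (hst : s ≤ t) (ha : ∀ k, 0 ≤ a k)
    (hU : ∀ k, U (k + 1) = (1 - a k) • U k + a k • u k)
    (hsum : Summable fun k => a k * ‖u k - U k‖ ^ 2)
    (hfar : ∀ k, s ≤ k → k < t → η ≤ ‖u k - U k‖) :
    dist (U s) (U t) ≤ (∑' k, a (k + s) * ‖u (k + s) - U (k + s)‖ ^ 2) / η :=
  calc dist (U s) (U t)
      ≤ ∑ k ∈ Finset.Ico s t, a k * ‖u k - U k‖ ^ 2 / η :=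
        dist_le_Ico_sum_of_dist_le hst fun {k} hsk hkt =>
          dist_average_succ_le hη (ha k) (hU k) (hfar k hsk hkt)
    _ = (∑ k ∈ Finset.range (t - s), a (k + s) * ‖u (k + s) - U (k + s)‖ ^ 2) / η := by
        rw [← Finset.sum_div, Finset.sum_Ico_eq_sum_range]
        simp only [add_comm s]
    _ ≤ _ := by
        gcongr
        exact ((summable_nat_add_iff s).2 hsum).sum_le_tsum _
          fun k _ => mul_nonneg (ha _) (sq_nonneg _)

lemma cauchySeq_average {η : ℝ} (hη : 0 < η) (ha : ∀ k, 0 ≤ a k)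
    (hU : ∀ k, U (k + 1) = (1 - a k) • U k + a k • u k)
    (hsum : Summable fun k => a k * ‖u k - U k‖ ^ 2)
    (hfar : ∀ᶠ k in atTop, η ≤ ‖u k - U k‖) : CauchySeq U := by
  refine cauchySeq_of_summable_dist <|
    (hsum.div_const η).of_norm_bounded_eventually_nat ?_
  filter_upwards [hfar] with k hk
  rw [Real.norm_of_nonneg dist_nonneg]
  exact dist_average_succ_le hη (ha k) (hU k) hk

lemma catchesUp_average (ha : ∀ k, 0 ≤ a k)
    (hU : ∀ k, U (k + 1) = (1 - a k) • U k + a k • u k)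
    (hsum : Summable fun k => a k * ‖u k - U k‖ ^ 2)
    (hnear : ∀ η > 0, ∃ᶠ k in atTop, ‖u k - U k‖ < η) : CatchesUp u U := by
  classical
  set tail : ℕ → ℝ := fun n => ∑' k, a (k + n) * ‖u (k + n) - U (k + n)‖ ^ 2
  have tail_nonneg (n : ℕ) : 0 ≤ tail n := tsum_nonneg fun k => mul_nonneg (ha _) (sq_nonneg _)
  have sqrt_tail_lim : Tendsto (fun n => √(tail n)) atTop (𝓝 0) := by
    simpa using (tendsto_sum_nat_add fun k => a k * ‖u k - U k‖ ^ 2).sqrt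
  set η : ℕ → ℝ := fun n => √(tail n) + 1 / ((n : ℝ) + 1)
  have η_pos (n : ℕ) : 0 < η n := by positivity
  have η_lim : Tendsto η atTop (𝓝 0) := by
    simpa only [add_zero] using
      sqrt_tail_lim.add (tendsto_one_div_add_atTop_nhds_zero_nat (𝕜 := ℝ))
  have near_exists (n : ℕ) : ∃ t, n ≤ t ∧ ‖u t - U t‖ < η n :=
    frequently_atTop.1 (hnear (η n) (η_pos n)) n
  set t : ℕ → ℕ := fun n => Nat.find (near_exists n)
  have le_t (n : ℕ) : n ≤ t n := (Nat.find_spec (near_exists n)).1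
  have near_t (n : ℕ) : ‖u (t n) - U (t n)‖ ≤ η n := (Nat.find_spec (near_exists n)).2.le
  have far_before (n k : ℕ) (hnk : n ≤ k) (hkt : k < t n) : η n ≤ ‖u k - U k‖ :=
    not_lt.1 fun hk => Nat.find_min (near_exists n) hkt ⟨hnk, hk⟩
  have move_le (n : ℕ) : ‖U (t n) - U n‖ ≤ √(tail n) := by
    rw [← dist_eq_norm, dist_comm]
    refine (dist_average_le_tsum_div (η_pos n) (le_t n) ha hU hsum (far_before n)).trans ?_
    rw [div_le_iff₀ (η_pos n)]
    calc tail n = √(tail n) * √(tail n) := (Real.mul_self_sqrt (tail_nonneg n)).symm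
      _ ≤ √(tail n) * η n := by gcongr; exact le_add_of_nonneg_right (by positivity)
  exact ⟨t, tendsto_atTop_mono le_t tendsto_id, squeeze_zero_norm move_le sqrt_tail_lim,
    squeeze_zero_norm near_t η_lim⟩

theorem tendsto_or_catchesUp_average [CompleteSpace E] (ha : ∀ k, 0 ≤ a k)
    (hU : ∀ k, U (k + 1) = (1 - a k) • U k + a k • u k)
    (hsum : Summable fun k => a k * ‖u k - U k‖ ^ 2) :
    (∃ L, Tendsto U atTop (𝓝 L)) ∨ CatchesUp u U := by
  by_cases hnear : ∀ η > 0, ∃ᶠ k in atTop, ‖u k - U k‖ < η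
  · exact .inr (catchesUp_average ha hU hsum hnear)
  · push Not at hnear
    obtain ⟨η, hη, hfar⟩ := hnear
    exact .inl (cauchySeq_tendsto_of_complete (cauchySeq_average hη ha hU hsum hfar))

end Averages

section Opial

lemma tendsto_zero_of_mul_norm_sq_le {ι Z : Type*} [NormedAddCommGroup Z] {l : Filter ι}
    {N : Z → ℝ} {c : ℝ} {ζ : ι → Z} (hc : 0 < c) (hcN : ∀ ζ, c * ‖ζ‖ ^ 2 ≤ N ζ)
    (hlim : Tendsto (fun k => N (ζ k)) l (𝓝 0)) : Tendsto ζ l (𝓝 0) := by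
  have bound (k : ι) : ‖ζ k‖ ≤ √(N (ζ k) / c) :=
    Real.le_sqrt_of_sq_le <| (le_div_iff₀' hc).2 (hcN _)
  exact squeeze_zero_norm bound (by simpa using (hlim.div_const c).sqrt)

variable {X Y : Type*} [NormedAddCommGroup X] [NormedAddCommGroup Y] {S : Set (X × Y)}
  {N : X × Y → ℝ} {c : ℝ} {z : ℕ → X × Y} {U : ℕ → X} {V : ℕ → Y} {α β : ℕ → ℝ}

/- Moving on from the times `φ n` until `V` has caught up changes neither the limit of the energy
nor that of `V`, so it keeps `z` close to `s`, and in the end `V` is close to `s.2` as well. -/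
lemma energy_limit_eq_zero_of_catchesUp {s : X × Y} {V₀ : Y} {l : ℝ} {φ : ℕ → ℕ}
    (hN : Continuous N) (hN0 : N 0 = 0) (hc : 0 < c) (hcN : ∀ ζ, c * ‖ζ‖ ^ 2 ≤ N ζ)
    (hα : ∀ k, 0 ≤ α k) (hαlim : ∃ l, Tendsto α atTop (𝓝 l)) (hβlim : ∃ l, Tendsto β atTop (𝓝 l))
    (hV : CatchesUp (fun k => (z k).2) V) (hφ : Tendsto φ atTop atTop)
    (hzφ : Tendsto (z ∘ φ) atTop (𝓝 s)) (hUφ : Tendsto (U ∘ φ) atTop (𝓝 s.1))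
    (hVφ : Tendsto (V ∘ φ) atTop (𝓝 V₀))
    (henergy : Tendsto (fun k => N (z k - s) + α k * ‖U k - s.1‖ ^ 2
      + β k * ‖V k - s.2‖ ^ 2) atTop (𝓝 l)) : l = 0 := by
  obtain ⟨α₀, hα₀⟩ := hαlim
  obtain ⟨β₀, hβ₀⟩ := hβlim
  have l_eq : l = β₀ * ‖V₀ - s.2‖ ^ 2 := by
    refine tendsto_nhds_unique (henergy.comp hφ) ?_
    simpa [Function.comp_def, hN0] using
      (((hN.tendsto _).comp (hzφ.sub_const s)).add
        ((hα₀.comp hφ).mul ((hUφ.sub_const s.1).norm.pow 2))).add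
        ((hβ₀.comp hφ).mul ((hVφ.sub_const s.2).norm.pow 2))
  obtain ⟨t, ht, hVmove, hVt⟩ := hV
  set θ : ℕ → ℕ := t ∘ φ
  have θ_lim : Tendsto θ atTop atTop := ht.comp hφ
  have V_θ : Tendsto (V ∘ θ) atTop (𝓝 V₀) := by
    simpa [Function.comp_def, θ] using (hVmove.comp hφ).add hVφ
  have N_θ : Tendsto (fun n => N (z (θ n) - s)) atTop (𝓝 0) := by
    have rest := (henergy.comp θ_lim).sub
      ((hβ₀.comp θ_lim).mul ((V_θ.sub_const s.2).norm.pow 2))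
    rw [l_eq, sub_self] at rest
    refine squeeze_zero (fun n => le_trans (by positivity) (hcN _)) (fun n => ?_) rest
    have := mul_nonneg (hα (θ n)) (sq_nonneg ‖U (θ n) - s.1‖)
    simp only [Function.comp_apply]
    linarith
  have z_θ : Tendsto (z ∘ θ) atTop (𝓝 s) :=
    tendsto_sub_nhds_zero_iff.1 (tendsto_zero_of_mul_norm_sq_le hc hcN N_θ)
  have V₀_eq : V₀ = s.2 := by
    refine tendsto_nhds_unique V_θ ?_
    simpa [Function.comp_def, θ] using z_θ.snd_nhds.sub (hVt.comp hφ)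
  simp [l_eq, V₀_eq]

variable [ProperSpace X] [ProperSpace Y]

theorem exists_tendsto_of_catchesUp (hN : Continuous N) (hN0 : N 0 = 0) (hc : 0 < c)
    (hcN : ∀ ζ, c * ‖ζ‖ ^ 2 ≤ N ζ) (hz : IsBounded (Set.range z)) (hVb : IsBounded (Set.range V))
    (hα : ∀ k, 0 ≤ α k) (hαlim : ∃ l, Tendsto α atTop (𝓝 l))
    (hβ : ∀ k, 0 ≤ β k) (hβlim : ∃ l, Tendsto β atTop (𝓝 l))
    (hU : CatchesUp (fun k => (z k).1) U) (hV : CatchesUp (fun k => (z k).2) V)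
    (henergy : ∀ s ∈ S, ∃ l, Tendsto (fun k => N (z k - s) + α k * ‖U k - s.1‖ ^ 2
      + β k * ‖V k - s.2‖ ^ 2) atTop (𝓝 l))
    (hcluster : ∀ s, MapClusterPt s atTop z → s ∈ S) :
    ∃ s ∈ S, Tendsto z atTop (𝓝 s) := by
  obtain ⟨t, ht, -, hUt⟩ := hU
  obtain ⟨⟨s, V₀⟩, -, ψ, hψ, hlim⟩ := tendsto_subseq_of_bounded (hz.prod hVb)
    (x := fun n => (z (t n), V (t n))) fun n => ⟨⟨_, rfl⟩, ⟨_, rfl⟩⟩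
  set φ : ℕ → ℕ := t ∘ ψ
  have φ_lim : Tendsto φ atTop atTop := ht.comp hψ.tendsto_atTop
  have z_φ : Tendsto (z ∘ φ) atTop (𝓝 s) := hlim.fst_nhds
  have V_φ : Tendsto (V ∘ φ) atTop (𝓝 V₀) := hlim.snd_nhds
  have U_φ : Tendsto (U ∘ φ) atTop (𝓝 s.1) := by
    simpa [Function.comp_def, φ] using z_φ.fst_nhds.sub (hUt.comp hψ.tendsto_atTop)
  have hs : s ∈ S := hcluster s (z_φ.mapClusterPt.of_comp φ_lim)
  obtain ⟨l, hl⟩ := henergy s hs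
  obtain rfl : l = 0 :=
    energy_limit_eq_zero_of_catchesUp hN hN0 hc hcN hα hαlim hβlim hV φ_lim z_φ U_φ V_φ hl
  have N_lim : Tendsto (fun k => N (z k - s)) atTop (𝓝 0) := by
    refine squeeze_zero (fun k => le_trans (by positivity) (hcN _)) (fun k => ?_) hl
    have := mul_nonneg (hα k) (sq_nonneg ‖U k - s.1‖)
    have := mul_nonneg (hβ k) (sq_nonneg ‖V k - s.2‖)
    linarith
  exact ⟨s, hs, tendsto_sub_nhds_zero_iff.1 (tendsto_zero_of_mul_norm_sq_le hc hcN N_lim)⟩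

theorem exists_tendsto_of_tendsto_or_catchesUp (hN : Continuous N) (hN0 : N 0 = 0) (hc : 0 < c)
    (hcN : ∀ ζ, c * ‖ζ‖ ^ 2 ≤ N ζ) (hz : IsBounded (Set.range z)) (hUb : IsBounded (Set.range U))
    (hVb : IsBounded (Set.range V)) (hα : ∀ k, 0 ≤ α k) (hαlim : ∃ l, Tendsto α atTop (𝓝 l))
    (hβ : ∀ k, 0 ≤ β k) (hβlim : ∃ l, Tendsto β atTop (𝓝 l))
    (hU : (∃ L, Tendsto U atTop (𝓝 L)) ∨ CatchesUp (fun k => (z k).1) U)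
    (hV : (∃ L, Tendsto V atTop (𝓝 L)) ∨ CatchesUp (fun k => (z k).2) V)
    (henergy : ∀ s ∈ S, ∃ l, Tendsto (fun k => N (z k - s) + α k * ‖U k - s.1‖ ^ 2
      + β k * ‖V k - s.2‖ ^ 2) atTop (𝓝 l))
    (hcluster : ∀ s, MapClusterPt s atTop z → s ∈ S) :
    ∃ s ∈ S, Tendsto z atTop (𝓝 s) := by
  have hz₁ : IsBounded (Set.range fun k => (z k).1) :=
    hz.image_fst.subset (by rintro _ ⟨k, rfl⟩; exact ⟨z k, ⟨k, rfl⟩, rfl⟩)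
  have hz₂ : IsBounded (Set.range fun k => (z k).2) :=
    hz.image_snd.subset (by rintro _ ⟨k, rfl⟩; exact ⟨z k, ⟨k, rfl⟩, rfl⟩)
  obtain ⟨U', α', hU', -, hα', hα'lim, hUdiff⟩ :=
    exists_catchesUp_of_tendsto_or_catchesUp hz₁ hUb hα hαlim hU
  obtain ⟨V', β', hV', hV'b, hβ', hβ'lim, hVdiff⟩ :=
    exists_catchesUp_of_tendsto_or_catchesUp hz₂ hVb hβ hβlim hV
  refine exists_tendsto_of_catchesUp hN hN0 hc hcN hz hV'b hα' hα'lim hβ' hβ'lim hU' hV'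
    (fun s hs => ?_) hcluster
  obtain ⟨l, hl⟩ := henergy s hs
  obtain ⟨lU, hlU⟩ := hUdiff s.1
  obtain ⟨lV, hlV⟩ := hVdiff s.2
  exact ⟨l - lU - lV, ((hl.sub hlU).sub hlV).congr fun k => by ring⟩

end Opial

section Prox

variable {X : Type*} [NormedAddCommGroup X] [InnerProductSpace ℝ X] {g : X → ℝ} {τ : ℝ}

lemma IsProx.add_inner_div_le {w z : X} (hz : IsProx τ g w z) (hg : ConvexOn ℝ Set.univ g)
    (x : X) : g z + ⟪w - z, x - z⟫ / τ ≤ g x := by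
  have along_segment (t : ℝ) (ht : t ∈ Set.Ioc (0 : ℝ) 1) :
      g z + ⟪w - z, x - z⟫ / τ - g x ≤ t * (‖x - z‖ ^ 2 / (2 * τ)) := by
    have convexity := hg.2 (Set.mem_univ z) (Set.mem_univ x) (sub_nonneg.2 ht.2) ht.1.le (by ring)
    have minimality := hz ((1 - t) • z + t • x)
    have expand : ‖(1 - t) • z + t • x - w‖ ^ 2
        = ‖z - w‖ ^ 2 - 2 * t * ⟪w - z, x - z⟫ + t ^ 2 * ‖x - z‖ ^ 2 := by
      rw [show (1 - t) • z + t • x - w = (z - w) + t • (x - z) by module, norm_add_sq_real,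
        inner_smul_right, norm_smul, mul_pow, Real.norm_eq_abs, sq_abs, ← neg_sub w z,
        inner_neg_left]
      ring
    rw [expand] at minimality
    simp only [smul_eq_mul] at convexity
    refine le_of_mul_le_mul_left ?_ ht.1
    linear_combination convexity + minimality
  have bound_tendsto : Tendsto (fun t : ℝ => t * (‖x - z‖ ^ 2 / (2 * τ))) (𝓝[>] 0) (𝓝 0) :=
    ((continuous_id.mul continuous_const).tendsto' 0 0 (zero_mul _)).mono_left nhdsWithin_le_nhds
  refine sub_nonpos.1 (ge_of_tendsto bound_tendsto ?_)
  filter_upwards [Ioc_mem_nhdsGT (zero_lt_one (α := ℝ))] with t ht using along_segment t ht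

lemma IsProx.add_inner_div_add_inner_le {m p z : X} (hz : IsProx τ g (m + τ • p) z)
    (hg : ConvexOn ℝ Set.univ g) (hτ : τ ≠ 0) (x : X) :
    g z + ⟪m - z, x - z⟫ / τ + ⟪p, x - z⟫ ≤ g x := by
  have h := hz.add_inner_div_le hg x
  rwa [add_sub_right_comm, inner_add_left, real_inner_smul_left, add_div,
    mul_div_cancel_left₀ _ hτ, ← add_assoc] at h

lemma two_mul_inner_momentum_step {a : ℝ} {u u' U U' : X} (hU : U' = (1 - a) • U + a • u)
    (s : X) :
    2 * ⟪(1 - a) • u + a • U' - u', u' - s⟫ =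
      (‖u - s‖ ^ 2 + (1 - a) * ‖U - s‖ ^ 2) - (‖u' - s‖ ^ 2 + (1 - a) * ‖U' - s‖ ^ 2)
      - (1 - a) * ‖u' - u‖ ^ 2 - a * (1 - a) * ‖u - U‖ ^ 2 - a * ‖u' - U'‖ ^ 2 := by
  obtain ⟨p, rfl⟩ : ∃ p, u = p + s := ⟨u - s, by abel⟩
  obtain ⟨q, rfl⟩ : ∃ q, U = q + s := ⟨U - s, by abel⟩
  obtain ⟨r, rfl⟩ : ∃ r, u' = r + s := ⟨u' - s, by abel⟩
  obtain rfl : U' = (1 - a) • q + a • p + s := by rw [hU]; module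
  rw [show (1 - a) • (p + s) + a • ((1 - a) • q + a • p + s) - (r + s)
    = (1 - a) • p + a • ((1 - a) • q + a • p) - r by module]
  simp only [add_sub_add_right_eq_sub, add_sub_cancel_right]
  simp only [← real_inner_self_eq_norm_sq, inner_sub_left, inner_sub_right, inner_add_left,
    inner_add_right, real_inner_smul_left, real_inner_smul_right]
  rw [real_inner_comm p q, real_inner_comm p r, real_inner_comm q r]
  ring

lemma two_mul_inner_momentum_step_div_le {a : ℝ} {u u' U U' : X} (ha : 0 ≤ a) (hτ : 0 < τ)
    (hU : U' = (1 - a) • U + a • u) (s : X) :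
    2 * (⟪(1 - a) • u + a • U' - u', u' - s⟫ / τ) ≤
      (‖u - s‖ ^ 2 / τ + (1 - a) * (‖U - s‖ ^ 2 / τ))
      - (‖u' - s‖ ^ 2 / τ + (1 - a) * (‖U' - s‖ ^ 2 / τ))
      - (1 - a) * (‖u' - u‖ ^ 2 / τ) - (1 - a) * (a * ‖u - U‖ ^ 2 / τ) := by
  have drop : 0 ≤ a * ‖u' - U'‖ ^ 2 / τ := by positivity
  linear_combination two_mul_inner_momentum_step hU (u' := u') s / τ + drop

lemma tendsto_momentum_step_sub_zero {u U : ℕ → X} {a : ℕ → ℝ} (ha : ∀ k, a k ∈ Set.Icc (0 : ℝ) 1)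
    (hU : ∀ k, U (k + 1) = (1 - a k) • U k + a k • u k)
    (hstep : Tendsto (fun k => u (k + 1) - u k) atTop (𝓝 0))
    (hgap : Tendsto (fun k => a k * ‖u k - U k‖ ^ 2) atTop (𝓝 0)) :
    Tendsto (fun k => (1 - a k) • u k + a k • U (k + 1) - u (k + 1)) atTop (𝓝 0) := by
  have pull : Tendsto (fun k => (a k * (1 - a k)) • (U k - u k)) atTop (𝓝 0) := by
    refine squeeze_zero_norm (fun k => Real.le_sqrt_of_sq_le ?_) (Real.sqrt_zero ▸ hgap.sqrt)
    obtain ⟨ha0, ha1⟩ := ha k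
    rw [norm_smul, mul_pow, Real.norm_eq_abs, sq_abs, norm_sub_rev]
    gcongr
    calc (a k * (1 - a k)) ^ 2 = a k * (a k * (1 - a k) ^ 2) := by ring
      _ ≤ a k * 1 := by
          gcongr
          exact mul_le_one₀ ha1 (sq_nonneg _) (pow_le_one₀ (by linarith) (by linarith))
      _ = a k := mul_one _
  refine (sub_zero (0 : X) ▸ pull.sub hstep).congr fun k => ?_
  rw [hU]
  module

end Prox

section Descent

lemma summable_of_add_le {E r : ℕ → ℝ} (hE : ∀ k, 0 ≤ E k) (hr : ∀ k, 0 ≤ r k)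
    (hstep : ∀ k, E (k + 1) + r k ≤ E k) : Summable r := by
  refine summable_of_sum_range_le (c := E 0) hr fun n => ?_
  calc ∑ k ∈ Finset.range n, r k ≤ ∑ k ∈ Finset.range n, (E k - E (k + 1)) :=
        Finset.sum_le_sum fun k _ => le_sub_iff_add_le'.2 (hstep k)
    _ = E 0 - E n := Finset.sum_range_sub' E n
    _ ≤ E 0 := sub_le_self _ (hE n)

lemma exists_tendsto_of_antitone_of_forall_le {E : ℕ → ℝ} {m : ℝ} (hE : Antitone E)
    (hm : ∀ k, m ≤ E k) : ∃ l, Tendsto E atTop (𝓝 l) :=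
  ⟨_, tendsto_atTop_ciInf hE ⟨m, Set.forall_mem_range.2 hm⟩⟩

lemma isBounded_range_of_mul_norm_sub_sq_le {Z : Type*} [NormedAddCommGroup Z] {u : ℕ → Z} {p : Z}
    {c M : ℝ} (hc : 0 < c) (hM : ∀ k, c * ‖u k - p‖ ^ 2 ≤ M) : IsBounded (Set.range u) := by
  refine Metric.isBounded_closedBall (x := p) (r := √(M / c)) |>.subset ?_
  rintro _ ⟨k, rfl⟩
  rw [mem_closedBall_iff_norm]
  exact Real.le_sqrt_of_sq_le ((le_div_iff₀' hc).2 (hM k))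

end Descent

section PrimalDualNorm

variable {X Y : Type*} [NormedAddCommGroup X] [InnerProductSpace ℝ X] [NormedAddCommGroup Y]
  [InnerProductSpace ℝ Y] {K : X →L[ℝ] Y} {τ σ : ℝ}

/-- The quadratic form `‖p‖² / τ + ‖q‖² / σ - 2 ⟪K p, q⟫` that plays the role of the squared norm
of `(p, q)` in the analysis of primal-dual methods; it is coercive when `√(σ τ) ‖K‖ < 1`. -/
noncomputable def pdNormSq (K : X →L[ℝ] Y) (τ σ : ℝ) (ζ : X × Y) : ℝ :=
  ‖ζ.1‖ ^ 2 / τ + ‖ζ.2‖ ^ 2 / σ - 2 * ⟪K ζ.1, ζ.2⟫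

lemma pdNormSq_zero : pdNormSq K τ σ 0 = 0 := by simp [pdNormSq]

lemma continuous_pdNormSq : Continuous (pdNormSq K τ σ) := by
  unfold pdNormSq
  fun_prop

lemma two_mul_mul_le_sqrt_mul_add (hτ : 0 < τ) (hσ : 0 < σ) (p q : ℝ) :
    2 * (p * q) ≤ √(σ * τ) * (p ^ 2 / τ + q ^ 2 / σ) := by
  obtain ⟨t, ht, rfl⟩ : ∃ t, 0 < t ∧ t ^ 2 = τ := ⟨√τ, by positivity, Real.sq_sqrt hτ.le⟩
  obtain ⟨r, hr, rfl⟩ : ∃ r, 0 < r ∧ r ^ 2 = σ := ⟨√σ, by positivity, Real.sq_sqrt hσ.le⟩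
  rw [← mul_pow, Real.sqrt_sq (by positivity), ← sub_nonneg]
  calc 0 ≤ (r * p - t * q) ^ 2 / (r * t) := by positivity
    _ = r * t * (p ^ 2 / t ^ 2 + q ^ 2 / r ^ 2) - 2 * (p * q) := by field_simp; ring

lemma two_mul_inner_map_le (hτ : 0 < τ) (hσ : 0 < σ) (p : X) (q : Y) :
    2 * ⟪K p, q⟫ ≤ √(σ * τ) * ‖K‖ * (‖p‖ ^ 2 / τ + ‖q‖ ^ 2 / σ) :=
  calc 2 * ⟪K p, q⟫ ≤ 2 * (‖K p‖ * ‖q‖) := by gcongr; exact real_inner_le_norm _ _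
    _ ≤ 2 * (‖K‖ * ‖p‖ * ‖q‖) := by gcongr; exact K.le_opNorm p
    _ = ‖K‖ * (2 * (‖p‖ * ‖q‖)) := by ring
    _ ≤ ‖K‖ * (√(σ * τ) * (‖p‖ ^ 2 / τ + ‖q‖ ^ 2 / σ)) := by
        exact mul_le_mul_of_nonneg_left (two_mul_mul_le_sqrt_mul_add hτ hσ _ _) (norm_nonneg K)
    _ = √(σ * τ) * ‖K‖ * (‖p‖ ^ 2 / τ + ‖q‖ ^ 2 / σ) := by ring

lemma mul_norm_sq_le_pdNormSq (hτ : 0 < τ) (hσ : 0 < σ) (hK : √(σ * τ) * ‖K‖ ≤ 1) (ζ : X × Y) :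
    (1 - √(σ * τ) * ‖K‖) * min τ⁻¹ σ⁻¹ * ‖ζ‖ ^ 2 ≤ pdNormSq K τ σ ζ := by
  have norm_sq_le : min τ⁻¹ σ⁻¹ * ‖ζ‖ ^ 2 ≤ ‖ζ.1‖ ^ 2 / τ + ‖ζ.2‖ ^ 2 / σ := by
    rw [div_eq_inv_mul, div_eq_inv_mul]
    obtain hζ | hζ := max_choice ‖ζ.1‖ ‖ζ.2‖
    · rw [Prod.norm_def, hζ]
      exact le_add_of_le_of_nonneg (by gcongr; exact min_le_left _ _) (by positivity)
    · rw [Prod.norm_def, hζ]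
      exact le_add_of_nonneg_of_le (by positivity) (by gcongr; exact min_le_right _ _)
  calc (1 - √(σ * τ) * ‖K‖) * min τ⁻¹ σ⁻¹ * ‖ζ‖ ^ 2
      ≤ (1 - √(σ * τ) * ‖K‖) * (‖ζ.1‖ ^ 2 / τ + ‖ζ.2‖ ^ 2 / σ) := by
        rw [mul_assoc]
        exact mul_le_mul_of_nonneg_left norm_sq_le (sub_nonneg.2 hK)
    _ ≤ pdNormSq K τ σ ζ := by
        unfold pdNormSq
        linear_combination two_mul_inner_map_le (K := K) hτ hσ ζ.1 ζ.2

/-- The Lyapunov function of the iteration: `ζ` is the displacement of the iterates from a saddle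
point, `ζag` the displacement of their averages, and `a`, `b` are the current averaging
parameters. -/
noncomputable def npdaEnergy (K : X →L[ℝ] Y) (τ σ a b : ℝ) (ζ ζag : X × Y) : ℝ :=
  pdNormSq K τ σ ζ + (1 - a) / τ * ‖ζag.1‖ ^ 2 + (1 - b) / σ * ‖ζag.2‖ ^ 2

lemma npdaEnergy_nonneg {a b : ℝ} (hτ : 0 < τ) (hσ : 0 < σ) (ha : a ≤ 1) (hb : b ≤ 1) {ζ : X × Y}
    (hζ : 0 ≤ pdNormSq K τ σ ζ) (ζag : X × Y) : 0 ≤ npdaEnergy K τ σ a b ζ ζag := by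
  have := sub_nonneg.2 ha
  have := sub_nonneg.2 hb
  unfold npdaEnergy
  positivity

lemma npdaEnergy_div_le_npdaEnergy_div {a b a' b' : ℝ} (hτ : 0 < τ) (hσ : 0 < σ) (ha : a < 1)
    (hb : b < 1) (haa' : a' ≤ a) (hbb' : b' ≤ b) {ζ : X × Y} (hζ : 0 ≤ pdNormSq K τ σ ζ)
    (ζag : X × Y) :
    npdaEnergy K τ σ a' b' ζ ζag / ((1 - a') * (1 - b')) ≤
      npdaEnergy K τ σ a b ζ ζag / ((1 - a) * (1 - b)) := by
  have split {a b : ℝ} (ha : a < 1) (hb : b < 1) :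
      npdaEnergy K τ σ a b ζ ζag / ((1 - a) * (1 - b)) =
        pdNormSq K τ σ ζ / ((1 - a) * (1 - b)) + ‖ζag.1‖ ^ 2 / τ / (1 - b)
          + ‖ζag.2‖ ^ 2 / σ / (1 - a) := by
    have := (sub_pos.2 ha).ne'
    have := (sub_pos.2 hb).ne'
    unfold npdaEnergy
    field_simp
  have := sub_pos.2 ha
  have := sub_pos.2 hb
  have := sub_pos.2 (haa'.trans_lt ha)
  rw [split ha hb, split (haa'.trans_lt ha) (hbb'.trans_lt hb)]
  gcongr

lemma isSaddlePoint_iff {g : X → ℝ} {h : Y → ℝ} {xs : X} {ys : Y} :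
    IsSaddlePoint g h K xs ys ↔
      (∀ x, g xs - ⟪K (x - xs), ys⟫ ≤ g x) ∧ ∀ y, h ys + ⟪K xs, y - ys⟫ ≤ h y := by
  simp only [map_sub, inner_sub_left, inner_sub_right]
  constructor
  · exact fun hs => ⟨fun x => by linarith [(hs x ys).2], fun y => by linarith [(hs xs y).1]⟩
  · rintro ⟨hx, hy⟩ x y
    exact ⟨by linarith [hy y], by linarith [hx x]⟩

end PrimalDualNorm

section NPDA

variable {X Y : Type*} [NormedAddCommGroup X] [NormedAddCommGroup Y]

/-- What one step of the iteration gains, up to a factor, in the Lyapunov function: the squared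
increments of the iterates and the weighted squared distances to their averages. -/
noncomputable def npdaResidual (a b : ℕ → ℝ) (τ σ : ℝ) (x xag : ℕ → X) (y yag : ℕ → Y)
    (k : ℕ) : ℝ :=
  ‖x (k + 1) - x k‖ ^ 2 / τ + ‖y (k + 1) - y k‖ ^ 2 / σ
    + a k * ‖x k - xag k‖ ^ 2 / τ + b k * ‖y k - yag k‖ ^ 2 / σ

variable [InnerProductSpace ℝ X] [InnerProductSpace ℝ Y] {K : X →L[ℝ] Y} {a b : ℕ → ℝ} {τ σ : ℝ}

/-- The conditions on the averaging parameters `a`, `b` and the stepsizes `τ`, `σ` of the NPDA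
iteration. Vanishing averaging parameters are allowed; `a = b = 0` is the primal-dual hybrid
gradient method. -/
structure IsNPDAParams (K : X →L[ℝ] Y) (a b : ℕ → ℝ) (τ σ : ℝ) : Prop where
  tau_pos : 0 < τ
  sigma_pos : 0 < σ
  a_nonneg (k : ℕ) : 0 ≤ a k
  b_nonneg (k : ℕ) : 0 ≤ b k
  a_antitone : Antitone a
  b_antitone : Antitone b
  lt_one_sub_a (k : ℕ) : √(σ * τ) * ‖K‖ < 1 - a k
  lt_one_sub_b (k : ℕ) : √(σ * τ) * ‖K‖ < 1 - b k

namespace IsNPDAParams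

lemma a_mem_Ico (hp : IsNPDAParams K a b τ σ) (k : ℕ) : a k ∈ Set.Ico (0 : ℝ) 1 :=
  ⟨hp.a_nonneg k, sub_pos.1 (lt_of_le_of_lt (by positivity) (hp.lt_one_sub_a k))⟩

lemma b_mem_Ico (hp : IsNPDAParams K a b τ σ) (k : ℕ) : b k ∈ Set.Ico (0 : ℝ) 1 :=
  ⟨hp.b_nonneg k, sub_pos.1 (lt_of_le_of_lt (by positivity) (hp.lt_one_sub_b k))⟩

lemma weight_mem_Ioc (hp : IsNPDAParams K a b τ σ) (k : ℕ) :
    (1 - a k) * (1 - b k) ∈ Set.Ioc (0 : ℝ) 1 := by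
  obtain ⟨ha0, ha1⟩ := hp.a_mem_Ico k
  obtain ⟨hb0, hb1⟩ := hp.b_mem_Ico k
  exact ⟨mul_pos (by linarith) (by linarith), mul_le_one₀ (by linarith) (by linarith) (by linarith)⟩

lemma exists_margin (hp : IsNPDAParams K a b τ σ) :
    ∃ δ > 0, ∀ k, √(σ * τ) * ‖K‖ + δ ≤ 1 - a k ∧ √(σ * τ) * ‖K‖ + δ ≤ 1 - b k := by
  refine ⟨min (1 - a 0 - √(σ * τ) * ‖K‖) (1 - b 0 - √(σ * τ) * ‖K‖),
    lt_min (sub_pos.2 (hp.lt_one_sub_a 0)) (sub_pos.2 (hp.lt_one_sub_b 0)), fun k => ⟨?_, ?_⟩⟩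
  · linarith [min_le_left (1 - a 0 - √(σ * τ) * ‖K‖) (1 - b 0 - √(σ * τ) * ‖K‖),
      hp.a_antitone k.zero_le]
  · linarith [min_le_right (1 - a 0 - √(σ * τ) * ‖K‖) (1 - b 0 - √(σ * τ) * ‖K‖),
      hp.b_antitone k.zero_le]

lemma exists_coercive (hp : IsNPDAParams K a b τ σ) :
    ∃ c > 0, ∀ ζ, c * ‖ζ‖ ^ 2 ≤ pdNormSq K τ σ ζ := by
  have hτ := hp.tau_pos
  have hσ := hp.sigma_pos
  have hK : √(σ * τ) * ‖K‖ < 1 := (hp.lt_one_sub_a 0).trans_le (sub_le_self 1 (hp.a_nonneg 0))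
  exact ⟨_, mul_pos (sub_pos.2 hK) (by positivity), mul_norm_sq_le_pdNormSq hτ hσ hK.le⟩

lemma pdNormSq_nonneg (hp : IsNPDAParams K a b τ σ) (ζ : X × Y) : 0 ≤ pdNormSq K τ σ ζ := by
  obtain ⟨c, hc, hcN⟩ := hp.exists_coercive
  exact le_trans (by positivity) (hcN ζ)

lemma npdaEnergy_nonneg (hp : IsNPDAParams K a b τ σ) (k : ℕ) (ζ ζag : X × Y) :
    0 ≤ npdaEnergy K τ σ (a k) (b k) ζ ζag :=
  _root_.npdaEnergy_nonneg hp.tau_pos hp.sigma_pos (hp.a_mem_Ico k).2.le (hp.b_mem_Ico k).2.le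
    (hp.pdNormSq_nonneg ζ) ζag

lemma npdaResidual_nonneg (hp : IsNPDAParams K a b τ σ) (x xag : ℕ → X) (y yag : ℕ → Y) (k : ℕ) :
    0 ≤ npdaResidual a b τ σ x xag y yag k := by
  have := hp.tau_pos
  have := hp.sigma_pos
  have := hp.a_nonneg k
  have := hp.b_nonneg k
  unfold npdaResidual
  positivity

lemma summable_of_summable_npdaResidual (hp : IsNPDAParams K a b τ σ) {x xag : ℕ → X}
    {y yag : ℕ → Y} (hr : Summable (npdaResidual a b τ σ x xag y yag)) :
    (Summable fun k => ‖x (k + 1) - x k‖ ^ 2) ∧ (Summable fun k => ‖y (k + 1) - y k‖ ^ 2) ∧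
      (Summable fun k => a k * ‖x k - xag k‖ ^ 2) ∧ Summable fun k => b k * ‖y k - yag k‖ ^ 2 := by
  have hτ := hp.tau_pos
  have hσ := hp.sigma_pos
  have of_le {c : ℝ} {f : ℕ → ℝ} (hc : 0 < c) (hf : ∀ k, 0 ≤ f k)
      (hle : ∀ k, f k / c ≤ npdaResidual a b τ σ x xag y yag k) : Summable f :=
    (summable_div_const_iff hc.ne').1 <|
      .of_nonneg_of_le (fun k => div_nonneg (hf k) hc.le) hle hr
  have x_nonneg (k : ℕ) : 0 ≤ ‖x (k + 1) - x k‖ ^ 2 / τ := by positivity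
  have y_nonneg (k : ℕ) : 0 ≤ ‖y (k + 1) - y k‖ ^ 2 / σ := by positivity
  have xag_nonneg (k : ℕ) : 0 ≤ a k * ‖x k - xag k‖ ^ 2 / τ := by
    have := hp.a_nonneg k
    positivity
  have yag_nonneg (k : ℕ) : 0 ≤ b k * ‖y k - yag k‖ ^ 2 / σ := by
    have := hp.b_nonneg k
    positivity
  unfold npdaResidual at of_le
  exact ⟨of_le hτ (fun k => sq_nonneg _) fun k => by
      linarith [y_nonneg k, xag_nonneg k, yag_nonneg k],
    of_le hσ (fun k => sq_nonneg _) fun k => by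
      linarith [x_nonneg k, xag_nonneg k, yag_nonneg k],
    of_le hτ (fun k => mul_nonneg (hp.a_nonneg k) (sq_nonneg _)) fun k => by
      linarith [x_nonneg k, y_nonneg k, yag_nonneg k],
    of_le hσ (fun k => mul_nonneg (hp.b_nonneg k) (sq_nonneg _)) fun k => by
      linarith [x_nonneg k, y_nonneg k, xag_nonneg k]⟩

end IsNPDAParams

variable [CompleteSpace X] [CompleteSpace Y]

/-- The recursion of NPDA, with arbitrary initial points. The dual variables are indexed one lower
than in the paper, and `a k`, `b k` are its `a_{k+1}`, `b_{k+2}`, so that step `k` produces all the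
data of index `k + 1` from those of index `k`. -/
structure IsNPDA (g : X → ℝ) (h : Y → ℝ) (K : X →L[ℝ] Y) (a b : ℕ → ℝ) (τ σ : ℝ)
    (x xag : ℕ → X) (y yag : ℕ → Y) : Prop where
  xag_succ (k : ℕ) : xag (k + 1) = (1 - a k) • xag k + a k • x k
  yag_succ (k : ℕ) : yag (k + 1) = (1 - b k) • yag k + b k • y k
  isProx_x (k : ℕ) : IsProx τ g
    ((1 - a k) • x k + a k • xag (k + 1) - τ • ContinuousLinearMap.adjoint K (y k)) (x (k + 1))
  isProx_y (k : ℕ) : IsProx σ h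
    ((1 - b k) • y k + b k • yag (k + 1) + σ • K ((2 : ℝ) • x (k + 1) - x k)) (y (k + 1))

variable {g : X → ℝ} {h : Y → ℝ} {x xag : ℕ → X} {y yag : ℕ → Y} {xs : X} {ys : Y}

namespace IsNPDA

lemma primal_le (hi : IsNPDA g h K a b τ σ x xag y yag) (hg : ConvexOn ℝ Set.univ g)
    (hτ : τ ≠ 0) (k : ℕ) (u : X) :
    g (x (k + 1)) + ⟪(1 - a k) • x k + a k • xag (k + 1) - x (k + 1), u - x (k + 1)⟫ / τ
      - ⟪K (u - x (k + 1)), y k⟫ ≤ g u := by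
  have hprox := hi.isProx_x k
  rw [sub_eq_add_neg, ← smul_neg] at hprox
  have hle := hprox.add_inner_div_add_inner_le hg hτ u
  rwa [inner_neg_left, ContinuousLinearMap.adjoint_inner_left, real_inner_comm _ (y k),
    ← sub_eq_add_neg] at hle

lemma dual_le (hi : IsNPDA g h K a b τ σ x xag y yag) (hh : ConvexOn ℝ Set.univ h)
    (hσ : σ ≠ 0) (k : ℕ) (v : Y) :
    h (y (k + 1)) + ⟪(1 - b k) • y k + b k • yag (k + 1) - y (k + 1), v - y (k + 1)⟫ / σ
      + ⟪K ((2 : ℝ) • x (k + 1) - x k), v - y (k + 1)⟫ ≤ h v :=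
  (hi.isProx_y k).add_inner_div_add_inner_le hh hσ v

/- The extrapolation `2 x (k + 1) - x k` makes the bilinear terms telescope. -/
lemma momentum_add_bilinear_nonneg (hi : IsNPDA g h K a b τ σ x xag y yag)
    (hg : ConvexOn ℝ Set.univ g) (hh : ConvexOn ℝ Set.univ h) (hτ : τ ≠ 0) (hσ : σ ≠ 0)
    (hs : IsSaddlePoint g h K xs ys) (k : ℕ) :
    0 ≤ ⟪(1 - a k) • x k + a k • xag (k + 1) - x (k + 1), x (k + 1) - xs⟫ / τ
      + ⟪(1 - b k) • y k + b k • yag (k + 1) - y (k + 1), y (k + 1) - ys⟫ / σ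
      + ⟪K (x (k + 1) - xs), y (k + 1) - ys⟫ - ⟪K (x k - xs), y k - ys⟫
      + ⟪K (x (k + 1) - x k), y (k + 1) - y k⟫ := by
  obtain ⟨hxs, hys⟩ := isSaddlePoint_iff.1 hs
  have primal := add_le_add (hi.primal_le hg hτ k xs) (hxs (x (k + 1)))
  have dual := add_le_add (hi.dual_le hh hσ k ys) (hys (y (k + 1)))
  rw [← neg_sub (x (k + 1)) xs, inner_neg_right, map_neg, inner_neg_left] at primal
  rw [← neg_sub (y (k + 1)) ys, inner_neg_right, inner_neg_right] at dual
  simp only [map_sub, map_smul, inner_sub_left, inner_sub_right, real_inner_smul_left]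
    at primal dual ⊢
  linear_combination primal + dual

lemma npdaEnergy_succ_add_le (hi : IsNPDA g h K a b τ σ x xag y yag)
    (hg : ConvexOn ℝ Set.univ g) (hh : ConvexOn ℝ Set.univ h) (hp : IsNPDAParams K a b τ σ)
    (hs : IsSaddlePoint g h K xs ys) {δ : ℝ} {k : ℕ} (hδa : √(σ * τ) * ‖K‖ + δ ≤ 1 - a k)
    (hδb : √(σ * τ) * ‖K‖ + δ ≤ 1 - b k) :
    npdaEnergy K τ σ (a k) (b k) (x (k + 1) - xs, y (k + 1) - ys)
        (xag (k + 1) - xs, yag (k + 1) - ys)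
      + δ * npdaResidual a b τ σ x xag y yag k ≤
    npdaEnergy K τ σ (a k) (b k) (x k - xs, y k - ys) (xag k - xs, yag k - ys) := by
  have hτ := hp.tau_pos
  have hσ := hp.sigma_pos
  have ha := hp.a_nonneg k
  have hb := hp.b_nonneg k
  have key := hi.momentum_add_bilinear_nonneg hg hh hτ.ne' hσ.ne' hs k
  have primal := two_mul_inner_momentum_step_div_le ha hτ (hi.xag_succ k) (u' := x (k + 1)) xs
  have dual := two_mul_inner_momentum_step_div_le hb hσ (hi.yag_succ k) (u' := y (k + 1)) ys
  have cross := two_mul_inner_map_le (K := K) hτ hσ (x (k + 1) - x k) (y (k + 1) - y k)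
  have hκ : 0 ≤ √(σ * τ) * ‖K‖ := by positivity
  have x_gain := mul_le_mul_of_nonneg_right hδa
    (show 0 ≤ ‖x (k + 1) - x k‖ ^ 2 / τ by positivity)
  have y_gain := mul_le_mul_of_nonneg_right hδb
    (show 0 ≤ ‖y (k + 1) - y k‖ ^ 2 / σ by positivity)
  have xag_gain := mul_le_mul_of_nonneg_right (show δ ≤ 1 - a k by linarith)
    (show 0 ≤ a k * ‖x k - xag k‖ ^ 2 / τ by positivity)
  have yag_gain := mul_le_mul_of_nonneg_right (show δ ≤ 1 - b k by linarith)
    (show 0 ≤ b k * ‖y k - yag k‖ ^ 2 / σ by positivity)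
  simp only [npdaEnergy, pdNormSq, npdaResidual]
  linear_combination 2 * key + primal + dual + cross + x_gain + y_gain + xag_gain + yag_gain

/- The two averages carry different weights, so it is dividing by both `1 - a k` and `1 - b k` that
makes the energy decrease although its weights change with `k`. -/
lemma npdaEnergy_div_succ_add_le (hi : IsNPDA g h K a b τ σ x xag y yag)
    (hg : ConvexOn ℝ Set.univ g) (hh : ConvexOn ℝ Set.univ h) (hp : IsNPDAParams K a b τ σ)
    (hs : IsSaddlePoint g h K xs ys) {δ : ℝ} (hδ : 0 ≤ δ) {k : ℕ}
    (hδa : √(σ * τ) * ‖K‖ + δ ≤ 1 - a k) (hδb : √(σ * τ) * ‖K‖ + δ ≤ 1 - b k) :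
    npdaEnergy K τ σ (a (k + 1)) (b (k + 1)) (x (k + 1) - xs, y (k + 1) - ys)
        (xag (k + 1) - xs, yag (k + 1) - ys) / ((1 - a (k + 1)) * (1 - b (k + 1)))
      + δ * npdaResidual a b τ σ x xag y yag k ≤
    npdaEnergy K τ σ (a k) (b k) (x k - xs, y k - ys) (xag k - xs, yag k - ys)
      / ((1 - a k) * (1 - b k)) := by
  have reweight := npdaEnergy_div_le_npdaEnergy_div hp.tau_pos hp.sigma_pos (hp.a_mem_Ico k).2
    (hp.b_mem_Ico k).2 (hp.a_antitone k.le_succ) (hp.b_antitone k.le_succ)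
    (hp.pdNormSq_nonneg (x (k + 1) - xs, y (k + 1) - ys)) (xag (k + 1) - xs, yag (k + 1) - ys)
  have gain : δ * npdaResidual a b τ σ x xag y yag k ≤
      δ * npdaResidual a b τ σ x xag y yag k / ((1 - a k) * (1 - b k)) :=
    le_div_self (mul_nonneg hδ (hp.npdaResidual_nonneg x xag y yag k)) (hp.weight_mem_Ioc k).1
      (hp.weight_mem_Ioc k).2
  refine (add_le_add reweight gain).trans ?_
  rw [← add_div]
  exact div_le_div_of_nonneg_right (hi.npdaEnergy_succ_add_le hg hh hp hs hδa hδb)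
    (hp.weight_mem_Ioc k).1.le

lemma summable_npdaResidual (hi : IsNPDA g h K a b τ σ x xag y yag)
    (hg : ConvexOn ℝ Set.univ g) (hh : ConvexOn ℝ Set.univ h) (hp : IsNPDAParams K a b τ σ)
    (hs : IsSaddlePoint g h K xs ys) : Summable (npdaResidual a b τ σ x xag y yag) := by
  obtain ⟨δ, hδ, hmargin⟩ := hp.exists_margin
  refine (summable_mul_left_iff hδ.ne').1 <| summable_of_add_le
    (E := fun k => npdaEnergy K τ σ (a k) (b k) (x k - xs, y k - ys)
      (xag k - xs, yag k - ys) / ((1 - a k) * (1 - b k)))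
    (fun k => div_nonneg (hp.npdaEnergy_nonneg k _ _) (hp.weight_mem_Ioc k).1.le)
    (fun k => mul_nonneg hδ.le (hp.npdaResidual_nonneg x xag y yag k))
    fun k => hi.npdaEnergy_div_succ_add_le hg hh hp hs hδ.le (hmargin k).1 (hmargin k).2

lemma exists_tendsto_npdaEnergy (hi : IsNPDA g h K a b τ σ x xag y yag)
    (hg : ConvexOn ℝ Set.univ g) (hh : ConvexOn ℝ Set.univ h) (hp : IsNPDAParams K a b τ σ)
    (hs : IsSaddlePoint g h K xs ys) :
    ∃ l, Tendsto (fun k => npdaEnergy K τ σ (a k) (b k) (x k - xs, y k - ys)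
      (xag k - xs, yag k - ys)) atTop (𝓝 l) := by
  obtain ⟨δ, hδ, hmargin⟩ := hp.exists_margin
  obtain ⟨l, hl⟩ := exists_tendsto_of_antitone_of_forall_le (m := 0)
    (E := fun k => npdaEnergy K τ σ (a k) (b k) (x k - xs, y k - ys)
      (xag k - xs, yag k - ys) / ((1 - a k) * (1 - b k)))
    (antitone_nat_of_succ_le fun k =>
      le_of_add_le_of_nonneg_left (hi.npdaEnergy_div_succ_add_le hg hh hp hs hδ.le (hmargin k).1
        (hmargin k).2) (mul_nonneg hδ.le (hp.npdaResidual_nonneg x xag y yag k)))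
    fun k => div_nonneg (hp.npdaEnergy_nonneg k _ _) (hp.weight_mem_Ioc k).1.le
  obtain ⟨a₀, ha₀⟩ := exists_tendsto_of_antitone_of_forall_le hp.a_antitone hp.a_nonneg
  obtain ⟨b₀, hb₀⟩ := exists_tendsto_of_antitone_of_forall_le hp.b_antitone hp.b_nonneg
  exact ⟨_, (hl.mul ((ha₀.const_sub 1).mul (hb₀.const_sub 1))).congr fun k =>
    div_mul_cancel₀ _ (hp.weight_mem_Ioc k).1.ne'⟩

lemma isBounded_range (hi : IsNPDA g h K a b τ σ x xag y yag)
    (hg : ConvexOn ℝ Set.univ g) (hh : ConvexOn ℝ Set.univ h) (hp : IsNPDAParams K a b τ σ)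
    (hs : IsSaddlePoint g h K xs ys) :
    IsBounded (Set.range fun k => (x k, y k)) ∧ IsBounded (Set.range xag) ∧
      IsBounded (Set.range yag) := by
  obtain ⟨l, hl⟩ := hi.exists_tendsto_npdaEnergy hg hh hp hs
  obtain ⟨M, hM⟩ := hl.bddAbove_range
  replace hM (k : ℕ) := hM ⟨k, rfl⟩
  obtain ⟨δ, hδ, hmargin⟩ := hp.exists_margin
  obtain ⟨c, hc, hcN⟩ := hp.exists_coercive
  have hτ := hp.tau_pos
  have hσ := hp.sigma_pos
  have hκ : 0 ≤ √(σ * τ) * ‖K‖ := by positivity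
  have xag_weight (k : ℕ) : δ / τ * ‖xag k - xs‖ ^ 2 ≤ (1 - a k) / τ * ‖xag k - xs‖ ^ 2 := by
    gcongr
    linarith [(hmargin k).1]
  have yag_weight (k : ℕ) : δ / σ * ‖yag k - ys‖ ^ 2 ≤ (1 - b k) / σ * ‖yag k - ys‖ ^ 2 := by
    gcongr
    linarith [(hmargin k).2]
  have z_nonneg (k : ℕ) : 0 ≤ c * ‖(x k - xs, y k - ys)‖ ^ 2 := by positivity
  have xag_nonneg (k : ℕ) : 0 ≤ δ / τ * ‖xag k - xs‖ ^ 2 := by positivity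
  have yag_nonneg (k : ℕ) : 0 ≤ δ / σ * ‖yag k - ys‖ ^ 2 := by positivity
  have sum_le (k : ℕ) : c * ‖(x k - xs, y k - ys)‖ ^ 2 + δ / τ * ‖xag k - xs‖ ^ 2
      + δ / σ * ‖yag k - ys‖ ^ 2 ≤ M :=
    (add_le_add_three (hcN _) (xag_weight k) (yag_weight k)).trans (hM k)
  refine ⟨isBounded_range_of_mul_norm_sub_sq_le (p := (xs, ys)) (M := M) hc fun k => ?_,
    isBounded_range_of_mul_norm_sub_sq_le (p := xs) (M := M) (div_pos hδ hτ) fun k => ?_,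
    isBounded_range_of_mul_norm_sub_sq_le (p := ys) (M := M) (div_pos hδ hσ) fun k => ?_⟩
  · rw [Prod.mk_sub_mk]
    linarith [sum_le k, xag_nonneg k, yag_nonneg k]
  · linarith [sum_le k, z_nonneg k, yag_nonneg k]
  · linarith [sum_le k, z_nonneg k, xag_nonneg k]

lemma primal_optimality_of_tendsto (hi : IsNPDA g h K a b τ σ x xag y yag)
    (hg : ConvexOn ℝ Set.univ g) (hgc : Continuous g) (hτ : τ ≠ 0) {φ : ℕ → ℕ}
    (hφ : Tendsto φ atTop atTop)
    (hmom : Tendsto (fun k => (1 - a k) • x k + a k • xag (k + 1) - x (k + 1)) atTop (𝓝 0))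
    (hx : Tendsto (fun n => x (φ n + 1)) atTop (𝓝 xs))
    (hy : Tendsto (fun n => y (φ n)) atTop (𝓝 ys)) (u : X) :
    g xs - ⟪K (u - xs), ys⟫ ≤ g u := by
  have lim := (((hgc.tendsto xs).comp hx).add
    (((hmom.comp hφ).inner (hx.const_sub u)).div_const τ)).sub
    (((K.continuous.tendsto _).comp (hx.const_sub u)).inner hy)
  rw [inner_zero_left, zero_div, add_zero] at lim
  exact le_of_tendsto' lim fun n => hi.primal_le hg hτ (φ n) u

lemma dual_optimality_of_tendsto (hi : IsNPDA g h K a b τ σ x xag y yag)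
    (hh : ConvexOn ℝ Set.univ h) (hhc : Continuous h) (hσ : σ ≠ 0) {φ : ℕ → ℕ}
    (hφ : Tendsto φ atTop atTop)
    (hmom : Tendsto (fun k => (1 - b k) • y k + b k • yag (k + 1) - y (k + 1)) atTop (𝓝 0))
    (hx : Tendsto (fun n => x (φ n)) atTop (𝓝 xs))
    (hx' : Tendsto (fun n => x (φ n + 1)) atTop (𝓝 xs))
    (hy : Tendsto (fun n => y (φ n + 1)) atTop (𝓝 ys)) (v : Y) :
    h ys + ⟪K xs, v - ys⟫ ≤ h v := by
  have lim := (((hhc.tendsto ys).comp hy).add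
    (((hmom.comp hφ).inner (hy.const_sub v)).div_const σ)).add
    (((K.continuous.tendsto _).comp ((hx'.const_smul (2 : ℝ)).sub hx)).inner (hy.const_sub v))
  rw [inner_zero_left, zero_div, add_zero, two_smul, add_sub_cancel_right] at lim
  exact le_of_tendsto' lim fun n => hi.dual_le hh hσ (φ n) v

lemma isSaddlePoint_of_mapClusterPt (hi : IsNPDA g h K a b τ σ x xag y yag)
    (hg : ConvexOn ℝ Set.univ g) (hgc : Continuous g) (hh : ConvexOn ℝ Set.univ h)
    (hhc : Continuous h) (hp : IsNPDAParams K a b τ σ)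
    (hr : Summable (npdaResidual a b τ σ x xag y yag)) {s : X × Y}
    (hs : MapClusterPt s atTop fun k => (x k, y k)) : IsSaddlePoint g h K s.1 s.2 := by
  obtain ⟨x_sq, y_sq, xag_sq, yag_sq⟩ := hp.summable_of_summable_npdaResidual hr
  have x_step : Tendsto (fun k => x (k + 1) - x k) atTop (𝓝 0) :=
    tendsto_zero_of_mul_norm_sq_le one_pos (fun ζ => (one_mul _).le) x_sq.tendsto_atTop_zero
  have y_step : Tendsto (fun k => y (k + 1) - y k) atTop (𝓝 0) :=
    tendsto_zero_of_mul_norm_sq_le one_pos (fun ζ => (one_mul _).le) y_sq.tendsto_atTop_zero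
  have x_mom := tendsto_momentum_step_sub_zero (fun k => Set.Ico_subset_Icc_self (hp.a_mem_Ico k))
    hi.xag_succ x_step xag_sq.tendsto_atTop_zero
  have y_mom := tendsto_momentum_step_sub_zero (fun k => Set.Ico_subset_Icc_self (hp.b_mem_Ico k))
    hi.yag_succ y_step yag_sq.tendsto_atTop_zero
  obtain ⟨φ, hφ_mono, hφ⟩ := hs.tendsto_subseq
  have φ_lim := hφ_mono.tendsto_atTop
  have x_φ : Tendsto (fun n => x (φ n)) atTop (𝓝 s.1) := hφ.fst_nhds
  have y_φ : Tendsto (fun n => y (φ n)) atTop (𝓝 s.2) := hφ.snd_nhds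
  have x_φ_succ : Tendsto (fun n => x (φ n + 1)) atTop (𝓝 s.1) := by
    simpa [Function.comp_def] using (x_step.comp φ_lim).add x_φ
  have y_φ_succ : Tendsto (fun n => y (φ n + 1)) atTop (𝓝 s.2) := by
    simpa [Function.comp_def] using (y_step.comp φ_lim).add y_φ
  exact isSaddlePoint_iff.2
    ⟨hi.primal_optimality_of_tendsto hg hgc hp.tau_pos.ne' φ_lim x_mom x_φ_succ y_φ,
      hi.dual_optimality_of_tendsto hh hhc hp.sigma_pos.ne' φ_lim y_mom x_φ x_φ_succ y_φ_succ⟩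

end IsNPDA

end NPDA

theorem npda_global_convergence_general {X Y : Type*}
    [NormedAddCommGroup X] [InnerProductSpace ℝ X] [FiniteDimensional ℝ X]
    [NormedAddCommGroup Y] [InnerProductSpace ℝ Y] [FiniteDimensional ℝ Y]
    {g : X → ℝ} {h : Y → ℝ} {K : X →L[ℝ] Y} (hg : ConvexOn ℝ Set.univ g)
    (hh : ConvexOn ℝ Set.univ h) {a b : ℕ → ℝ} {τ σ : ℝ} (hp : IsNPDAParams K a b τ σ)
    {x xag : ℕ → X} {y yag : ℕ → Y} (hi : IsNPDA g h K a b τ σ x xag y yag)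
    (hexists : ∃ xs ys, IsSaddlePoint g h K xs ys) :
    ∃ xs ys, IsSaddlePoint g h K xs ys ∧ Tendsto x atTop (𝓝 xs) ∧ Tendsto y atTop (𝓝 ys) := by
  have := FiniteDimensional.proper ℝ X
  have := FiniteDimensional.proper ℝ Y
  obtain ⟨xs₀, ys₀, hs₀⟩ := hexists
  have residual_summable := hi.summable_npdaResidual hg hh hp hs₀
  obtain ⟨-, -, xag_sq, yag_sq⟩ := hp.summable_of_summable_npdaResidual residual_summable
  obtain ⟨z_bounded, xag_bounded, yag_bounded⟩ := hi.isBounded_range hg hh hp hs₀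
  obtain ⟨c, hc, hcN⟩ := hp.exists_coercive
  obtain ⟨a₀, ha₀⟩ := exists_tendsto_of_antitone_of_forall_le hp.a_antitone hp.a_nonneg
  obtain ⟨b₀, hb₀⟩ := exists_tendsto_of_antitone_of_forall_le hp.b_antitone hp.b_nonneg
  obtain ⟨s, hs, hlim⟩ := exists_tendsto_of_tendsto_or_catchesUp
    (S := {s | IsSaddlePoint g h K s.1 s.2}) continuous_pdNormSq pdNormSq_zero hc hcN
    z_bounded xag_bounded yag_bounded
    (fun k => div_nonneg (sub_pos.2 (hp.a_mem_Ico k).2).le hp.tau_pos.le)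
    ⟨_, (ha₀.const_sub 1).div_const τ⟩
    (fun k => div_nonneg (sub_pos.2 (hp.b_mem_Ico k).2).le hp.sigma_pos.le)
    ⟨_, (hb₀.const_sub 1).div_const σ⟩
    (tendsto_or_catchesUp_average hp.a_nonneg hi.xag_succ xag_sq)
    (tendsto_or_catchesUp_average hp.b_nonneg hi.yag_succ yag_sq)
    (fun s hs => hi.exists_tendsto_npdaEnergy hg hh hp hs)
    (fun s hs => hi.isSaddlePoint_of_mapClusterPt hg
      (continuousOn_univ.1 (hg.continuousOn isOpen_univ)) hh
      (continuousOn_univ.1 (hh.continuousOn isOpen_univ)) hp residual_summable hs)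
  exact ⟨s.1, s.2, hs, hlim.fst_nhds, hlim.snd_nhds⟩

/-- **Theorem 3.1 (global convergence of NPDA).** If the saddle problem admits a
saddle point, then the NPDA iterates `(x_k, y_k)` converge to a saddle point. -/
theorem npda_global_convergence
    {X Y : Type*}
    [NormedAddCommGroup X] [InnerProductSpace ℝ X] [FiniteDimensional ℝ X]
    [NormedAddCommGroup Y] [InnerProductSpace ℝ Y] [FiniteDimensional ℝ Y]
    (g : X → ℝ) (h : Y → ℝ) (K : X →L[ℝ] Y)
    (hg : ConvexOn ℝ Set.univ g) (hgc : Continuous g)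
    (hh : ConvexOn ℝ Set.univ h) (hhc : Continuous h)
    -- NPDA parameters
    (a b : ℕ → ℝ) (ha : ∀ k, a k ∈ Set.Ioo (0 : ℝ) 1) (hb : ∀ k, b k ∈ Set.Ioo (0 : ℝ) 1)
    (haanti : Antitone a) (hbanti : Antitone b)
    (τ σ : ℝ) (hτ : 0 < τ) (hσ : 0 < σ)
    (hstepa : ∀ k, Real.sqrt (σ * τ) * ‖K‖ < 1 - a k)
    (hstepb : ∀ k, Real.sqrt (σ * τ) * ‖K‖ < 1 - b k)
    -- NPDA iterates (with x₋₁ = x₀, y₀ = y₁, y₀^ag = y₁^ag = y₁)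
    (x xag xmd xbar : ℕ → X) (y yag ymd : ℕ → Y)
    (hxag0 : xag 0 = x 0) (hy0 : y 0 = y 1) (hyag0 : yag 0 = y 1) (hyag1 : yag 1 = y 1)
    (hxbar0 : xbar 0 = x 0)
    (hxag : ∀ k, xag (k + 1) = (1 - a (k + 1)) • xag k + a (k + 1) • x k)
    (hxmd : ∀ k, xmd (k + 1) = (1 - a (k + 1)) • x k + a (k + 1) • xag (k + 1))
    (hx : ∀ k, IsProx τ g
      (xmd (k + 1) - τ • (ContinuousLinearMap.adjoint K) (y (k + 1))) (x (k + 1)))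
    (hxbar : ∀ k, xbar (k + 1) = (2 : ℝ) • x (k + 1) - x k)
    (hyag : ∀ k, yag (k + 2) = (1 - b (k + 2)) • yag (k + 1) + b (k + 2) • y (k + 1))
    (hymd : ∀ k, ymd (k + 2) = (1 - b (k + 2)) • y (k + 1) + b (k + 2) • yag (k + 2))
    (hy : ∀ k, IsProx σ h (ymd (k + 2) + σ • K (xbar (k + 1))) (y (k + 2)))
    (hexists : ∃ xh : X, ∃ yh : Y, IsSaddlePoint g h K xh yh) :
    ∃ xs : X, ∃ ys : Y, IsSaddlePoint g h K xs ys ∧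
      Filter.Tendsto x Filter.atTop (nhds xs) ∧
      Filter.Tendsto y Filter.atTop (nhds ys) := by
  have hparams : IsNPDAParams K (fun k => a (k + 1)) (fun k => b (k + 2)) τ σ :=
    ⟨hτ, hσ, fun k => (ha _).1.le, fun k => (hb _).1.le,
      fun _ _ hkl => haanti (Nat.add_le_add_right hkl 1),
      fun _ _ hkl => hbanti (Nat.add_le_add_right hkl 2), fun k => hstepa _, fun k => hstepb _⟩
  have hiter : IsNPDA g h K (fun k => a (k + 1)) (fun k => b (k + 2)) τ σ x xag
      (fun k => y (k + 1)) (fun k => yag (k + 1)) :=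
    ⟨hxag, hyag, fun k => hxmd k ▸ hx k, fun k => hxbar k ▸ hymd k ▸ hy k⟩
  obtain ⟨xs, ys, hs, hxlim, hylim⟩ := npda_global_convergence_general hg hh hparams hiter hexists
  exact ⟨xs, ys, hs, hxlim, (tendsto_add_atTop_iff_nat 1).1 hylim⟩
end

section
/- (Inequality (l5) of NPDAL) Let g : X → ℝ be convex continuous, K : X → Y continuous linear with adjoint K^T, τ_{k−1} > 0, τ_k > 0, θ_k = τ_k/τ_{k−1}, and suppose x_k = Prox_{τ_{k−1}g}(x_k^{md} − τ_{k−1}K^Ty_k) for some x_k^{md} ∈ X, x_{k−1} ∈ X and y_k ∈ Y. Set x̄_k = x_k + θ_k(x_k − x_{k−1}). Then for every w ∈ X, ⟨θ_k(x_k − x_k^{md}) + τ_kK^Ty_k, w − x̄_k⟩ ≥ τ_k·((1 + θ_k)g(x_k) − g(w) − θ_k g(x_{k−1})). -/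
open scoped RealInnerProductSpace

/-! Comparing the proximal point `x_k` with points of the segment from `x_k` to `u`, the quadratic
penalty contributes its gradient plus a second-order term; so by convexity of `g`,
`v = τ_{k-1}⁻¹ (x_k^{md} - τ_{k-1} Kᵀ y_k - x_k)` is a subgradient of `g` at `x_k`. The claim is the
subgradient inequality at `w` plus `θ_k` times the one at `x_{k-1}`, scaled by `τ_k`: the two
displacements add up to `w - x̄_k`, and `-τ_k v = θ_k (x_k - x_k^{md}) + τ_k Kᵀ y_k`. -/

section

open Filter Topology

variable {X : Type*} [NormedAddCommGroup X] [InnerProductSpace ℝ X]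

/-- `v` is a subgradient of `g` at `z`, i.e. `v ∈ ∂g(z)`; the inner product identifies functionals
with vectors. -/
def IsSubgradient (g : X → ℝ) (z v : X) : Prop :=
  ∀ u, g z + ⟪v, u - z⟫ ≤ g u

lemma IsProx.add_inner_le_add_sq {τ : ℝ} {g : X → ℝ} {x z : X} (hz : IsProx τ g x z) (d : X) :
    g z + ⟪τ⁻¹ • (x - z), d⟫ ≤ g (z + d) + (2 * τ)⁻¹ * ‖d‖ ^ 2 := by
  have expand_sq : ‖z + d - x‖ ^ 2 = ‖z - x‖ ^ 2 - 2 * ⟪x - z, d⟫ + ‖d‖ ^ 2 := by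
    rw [add_sub_right_comm, norm_add_sq_real, ← neg_sub x z, inner_neg_left]
    ring
  have optimality := hz (z + d)
  rw [expand_sq] at optimality
  rw [real_inner_smul_left]
  ring_nf at optimality ⊢
  linarith

lemma isSubgradient_of_add_inner_le_add_sq {g : X → ℝ} (hg : ConvexOn ℝ Set.univ g)
    {z v : X} {C : ℝ} (hv : ∀ d, g z + ⟪v, d⟫ ≤ g (z + d) + C * ‖d‖ ^ 2) :
    IsSubgradient g z v := by
  intro u
  have segment_bound : ∀ t ∈ Set.Ioo (0 : ℝ) 1,
      g z + ⟪v, u - z⟫ ≤ g u + t * (C * ‖u - z‖ ^ 2) := by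
    rintro t ⟨t_pos, t_lt_one⟩
    have convexity : g (z + t • (u - z)) ≤ (1 - t) * g z + t * g u := by
      have h := hg.2 (Set.mem_univ z) (Set.mem_univ u) (sub_nonneg.2 t_lt_one.le) t_pos.le
        (sub_add_cancel 1 t)
      rwa [show (1 - t) • z + t • u = z + t • (u - z) by module] at h
    have quadratic_bound := hv (t • (u - z))
    rw [real_inner_smul_right, norm_smul, mul_pow, Real.norm_eq_abs, sq_abs] at quadratic_bound
    refine le_of_mul_le_mul_left ?_ t_pos
    linarith
  have tendsto_bound : Tendsto (fun t : ℝ ↦ g u + t * (C * ‖u - z‖ ^ 2)) (𝓝[>] 0) (𝓝 (g u)) := by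
    refine Tendsto.mono_left (Continuous.tendsto' (by fun_prop) _ _ ?_) nhdsWithin_le_nhds
    rw [zero_mul, add_zero]
  refine ge_of_tendsto tendsto_bound ?_
  filter_upwards [Ioo_mem_nhdsGT one_pos] with t ht using segment_bound t ht

lemma IsProx.isSubgradient {τ : ℝ} {g : X → ℝ} {x z : X} (hz : IsProx τ g x z)
    (hg : ConvexOn ℝ Set.univ g) : IsSubgradient g z (τ⁻¹ • (x - z)) :=
  isSubgradient_of_add_inner_le_add_sq hg hz.add_inner_le_add_sq

lemma IsSubgradient.add_inner_sub_extrapolation_le {g : X → ℝ} {z v : X} (hv : IsSubgradient g z v)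
    {θ : ℝ} (hθ : 0 ≤ θ) (x w : X) :
    (1 + θ) * g z + ⟪v, w - (z + θ • (z - x))⟫ ≤ g w + θ * g x :=
  calc (1 + θ) * g z + ⟪v, w - (z + θ • (z - x))⟫
      = (g z + ⟪v, w - z⟫) + θ * (g z + ⟪v, x - z⟫) := by
        rw [show w - (z + θ • (z - x)) = (w - z) + θ • (x - z) by module, inner_add_right,
          real_inner_smul_right]
        ring
    _ ≤ g w + θ * g x := add_le_add (hv w) (mul_le_mul_of_nonneg_left (hv x) hθ)

theorem npdal_extrapolated_prox_inequality_general {g : X → ℝ} (hg : ConvexOn ℝ Set.univ g)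
    {τkm τk θk : ℝ} (hτkm : 0 < τkm) (hτk : 0 ≤ τk) (hθk : θk = τk / τkm)
    {xmd xkm xk xbar p : X} (hxk : IsProx τkm g (xmd - τkm • p) xk)
    (hxbar : xbar = xk + θk • (xk - xkm)) (w : X) :
    τk * ((1 + θk) * g xk - g w - θk * g xkm) ≤ ⟪θk • (xk - xmd) + τk • p, w - xbar⟫ := by
  set v := τkm⁻¹ • (xmd - τkm • p - xk) with hv
  have hθk_nonneg : 0 ≤ θk := hθk ▸ div_nonneg hτk hτkm.le
  have extrapolated : (1 + θk) * g xk + ⟪v, w - xbar⟫ ≤ g w + θk * g xkm :=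
    hxbar ▸ (hxk.isSubgradient hg).add_inner_sub_extrapolation_le hθk_nonneg xkm w
  have direction_eq : θk • (xk - xmd) + τk • p = -(τk • v) := by
    rw [hv, hθk]
    match_scalars <;> field_simp
  calc τk * ((1 + θk) * g xk - g w - θk * g xkm)
      ≤ τk * -⟪v, w - xbar⟫ := mul_le_mul_of_nonneg_left (by linarith) hτk
    _ = ⟪θk • (xk - xmd) + τk • p, w - xbar⟫ := by
        rw [direction_eq, inner_neg_left, real_inner_smul_left v, mul_neg]

end

/-- Inequality (l5) of NPDAL: if `x_k = Prox_{τ_{k-1}g}(x_k^{md} - τ_{k-1}K^T y_k)`,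
`θ_k = τ_k/τ_{k-1}` and `x̄_k = x_k + θ_k(x_k - x_{k-1})`, then for all `w`,
`⟨θ_k(x_k - x_k^{md}) + τ_k K^T y_k, w - x̄_k⟩ ≥ τ_k((1 + θ_k)g(x_k) - g(w) - θ_k g(x_{k-1}))`. -/
theorem npdal_extrapolated_prox_inequality
    {X Y : Type*}
    [NormedAddCommGroup X] [InnerProductSpace ℝ X] [FiniteDimensional ℝ X]
    [NormedAddCommGroup Y] [InnerProductSpace ℝ Y] [FiniteDimensional ℝ Y]
    (g : X → ℝ) (hg : ConvexOn ℝ Set.univ g) (hgc : Continuous g)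
    (K : X →L[ℝ] Y)
    (τkm τk : ℝ) (hτkm : 0 < τkm) (hτk : 0 < τk)
    (θk : ℝ) (hθk : θk = τk / τkm)
    (xmd xkm xk : X) (yk : Y)
    (hxk : IsProx τkm g (xmd - τkm • (ContinuousLinearMap.adjoint K) yk) xk)
    (xbar : X) (hxbar : xbar = xk + θk • (xk - xkm)) :
    ∀ w : X,
      τk * ((1 + θk) * g xk - g w - θk * g xkm) ≤
        ⟪θk • (xk - xmd) + τk • (ContinuousLinearMap.adjoint K) yk, w - xbar⟫ :=
  npdal_extrapolated_prox_inequality_general hg hτkm hτk.le hθk hxk hxbar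
end

section
/- (Theorem 3.5, global convergence of NPDAL) Let {(x_k, y_k)} be generated by the NPDAL iteration (with stepsizes τ_k accepted by the linesearch, bounded below by some τ > 0 and with θ_k = τ_k/τ_{k−1} ≤ θ for all k), and suppose the saddle problem min_x max_y g(x) + ⟨Kx,y⟩ − h(y) admits a saddle point. Then the sequence {(x_k, y_k)} converges to a saddle point of the problem. -/
open scoped RealInnerProductSpace

/-
For every saddle point `(xh, yh)` the iteration decreases an energy, built from distances of the
iterates and their running averages to `(xh, yh)` and from the stepsize-weighted primal gap, up to
factors `1 + (ρ k - ρ (k + 1))` with `ρ = a + b` nonincreasing. Hence the energy converges, the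
iterates are bounded, consecutive iterates get close, and all cluster points are saddle points.

The difference of the energies at two saddle points `p`, `q` with a common partner is affine in the
iterates: it gives a limit for `⟪p - q, u k⟫ + (1 - α k) * ⟪p - q, v k⟫`, where `v` is the running
average of `u`. Since `v` follows `u`, `⟪p - q, u k⟫` itself converges, so `p` and `q` cannot be
distinct cluster points. For `x` this is immediate, because the gap terms cancel.

For `y` the gap terms differ and, as `τ` may be unbounded, need not vanish in the limit. They do
vanish along the good steps, where `θ (k + 1) ^ 2 ≤ 1 / 2 + θ k`. At any other step
`1 / (τ k * (1 / 2 + θ k))` drops by at least a constant multiple of `1 / τ k`; the linesearch bound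
then makes `K^T y` nearly constant between good steps. Cluster points of `y` with the same image
under `K^T` coincide, since their gap terms agree, so `y` is nearly constant between good steps too
and the limit along the good steps extends to the whole sequence.
-/

open Filter Topology

theorem exists_tendsto_of_antitone_of_mem_Ico {α : ℕ → ℝ} {lo hi : ℝ} (hanti : Antitone α)
    (hα : ∀ k, α k ∈ Set.Ico lo hi) : ∃ A < hi, Tendsto α atTop (𝓝 A) := by
  have hbdd : BddBelow (Set.range α) := ⟨lo, Set.forall_mem_range.2 fun k => (hα k).1⟩
  exact ⟨⨅ k, α k, (ciInf_le hbdd 0).trans_lt (hα 0).2, tendsto_atTop_ciInf hanti hbdd⟩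

section Averages

variable {s t lam : ℕ → ℝ} {c lo hi : ℝ} {m k n : ℕ}

theorem average_le_max (hlam : ∀ k, lam k ∈ Set.Icc (0 : ℝ) 1)
    (hs : ∀ k, s (k + 1) = (1 - lam k) * s k + lam k * t k)
    (hmn : m ≤ n) (ht : ∀ j ∈ Set.Ico m n, t j ≤ c) : s n ≤ max (s m) c := by
  induction n, hmn using Nat.le_induction with
  | base => exact le_max_left _ _
  | succ n hmn ih =>
    have hsn : s n ≤ max (s m) c := ih fun j hj => ht j ⟨hj.1, hj.2.trans n.lt_succ_self⟩
    have htn : t n ≤ max (s m) c := (ht n ⟨hmn, n.lt_succ_self⟩).trans (le_max_right _ _)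
    rw [hs]
    exact convex_Iic _ (Set.mem_Iic.2 hsn) (Set.mem_Iic.2 htn) (sub_nonneg.2 (hlam n).2)
      (hlam n).1 (sub_add_cancel _ _)

theorem min_le_average (hlam : ∀ k, lam k ∈ Set.Icc (0 : ℝ) 1)
    (hs : ∀ k, s (k + 1) = (1 - lam k) * s k + lam k * t k)
    (hmn : m ≤ n) (ht : ∀ j ∈ Set.Ico m n, c ≤ t j) : min (s m) c ≤ s n := by
  have := average_le_max (s := -s) (t := -t) (c := -c) hlam
    (fun k => by simp only [Pi.neg_apply, hs]; ring) hmn (fun j hj => neg_le_neg (ht j hj))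
  rwa [Pi.neg_apply, Pi.neg_apply, max_neg_neg, neg_le_neg_iff] at this

theorem abs_average_sub_le_of_mem_Icc (hlam : ∀ k, lam k ∈ Set.Icc (0 : ℝ) 1)
    (hs : ∀ k, s (k + 1) = (1 - lam k) * s k + lam k * t k)
    (hmk : m ≤ k) (hkn : k ≤ n) (ht : ∀ j ∈ Set.Ico m n, t j ∈ Set.Icc lo hi) :
    |s k - s m| ≤ |s n - s m| + |hi - lo| := by
  have ht₁ : ∀ j ∈ Set.Ico m k, t j ∈ Set.Icc lo hi := fun j hj => ht j ⟨hj.1, hj.2.trans_le hkn⟩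
  have ht₂ : ∀ j ∈ Set.Ico k n, t j ∈ Set.Icc lo hi := fun j hj => ht j ⟨hmk.trans hj.1, hj.2⟩
  have hk_le := le_max_iff.1 (average_le_max hlam hs hmk fun j hj => (ht₁ j hj).2)
  have hk_ge := min_le_iff.1 (min_le_average hlam hs hmk fun j hj => (ht₁ j hj).1)
  have hn_le := le_max_iff.1 (average_le_max hlam hs hkn fun j hj => (ht₂ j hj).2)
  have hn_ge := min_le_iff.1 (min_le_average hlam hs hkn fun j hj => (ht₂ j hj).1)
  have := le_abs_self (s n - s m)
  have := neg_abs_le (s n - s m)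
  have := abs_nonneg (s n - s m)
  have := le_abs_self (hi - lo)
  have := abs_nonneg (hi - lo)
  refine abs_le.2 ⟨?_, ?_⟩
  · rcases hk_ge with h | h <;> rcases hn_le with h' | h' <;> linarith
  · rcases hk_le with h | h <;> rcases hn_ge with h' | h' <;> linarith

theorem isBounded_range_of_average {E : Type*} [SeminormedAddCommGroup E] [NormedSpace ℝ E]
    {u v : ℕ → E} (hlam : ∀ k, lam k ∈ Set.Icc (0 : ℝ) 1)
    (hv : ∀ k, v (k + 1) = (1 - lam k) • v k + lam k • u k)
    (hu : Bornology.IsBounded (Set.range u)) : Bornology.IsBounded (Set.range v) := by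
  refine (isBounded_convexHull.2 (hu.insert (v 0))).subset (Set.range_subset_iff.2 fun n => ?_)
  induction n with
  | zero => exact subset_convexHull ℝ _ (Set.mem_insert _ _)
  | succ n ih =>
    rw [hv]
    exact convex_convexHull ℝ _ ih
      (subset_convexHull ℝ _ (Set.mem_insert_of_mem _ ⟨n, rfl⟩))
      (sub_nonneg.2 (hlam n).2) (hlam n).1 (sub_add_cancel _ _)

theorem exists_tendsto_of_average {T : ℝ} (hlam : ∀ k, lam k ∈ Set.Icc (0 : ℝ) 1)
    (hs : ∀ k, s (k + 1) = (1 - lam k) * s k + lam k * t k) (ht : Tendsto t atTop (𝓝 T)) :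
    ∃ S, Tendsto s atTop (𝓝 S) := by
  have hbdd := isBounded_iff_bddBelow_bddAbove.1
    (isBounded_range_of_average hlam hs (Metric.isBounded_range_of_tendsto t ht))
  refine tendsto_of_no_upcrossings dense_univ ?_ hbdd.2.isBoundedUnder_of_range
    hbdd.1.isBoundedUnder_of_range
  rintro lo - hi - hlohi ⟨hlo, hhi⟩
  rcases lt_or_ge T hi with hT | hT
  · obtain ⟨c, hc, hchi⟩ := exists_between (max_lt hlohi hT)
    obtain ⟨N, hN⟩ := eventually_atTop.1 (ht.eventually_le_const ((le_max_right _ _).trans_lt hc))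
    obtain ⟨m, hNm, hm⟩ := frequently_atTop.1 hlo N
    obtain ⟨n, hmn, hn⟩ := frequently_atTop.1 hhi m
    have hsn := average_le_max hlam hs hmn fun j hj => hN j (hNm.trans hj.1)
    exact (hsn.trans_lt (max_lt (hm.trans hlohi) hchi)).not_gt hn
  · obtain ⟨c, hloc, hchi⟩ := exists_between hlohi
    obtain ⟨N, hN⟩ := eventually_atTop.1 (ht.eventually_const_le (hchi.trans_le hT))
    obtain ⟨m, hNm, hm⟩ := frequently_atTop.1 hhi N
    obtain ⟨n, hmn, hn⟩ := frequently_atTop.1 hlo m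
    have hsn := min_le_average hlam hs hmn fun j hj => hN j (hNm.trans hj.1)
    exact (hn.trans_le ((le_min (hlohi.trans hm).le hloc.le).trans hsn)).false

end Averages

section AsymptoticallyConstantBetween

/-- Between consecutive visits to the index set `G`, the sequence `u` varies by an amount that
tends to zero. For `G = Set.univ` this says that consecutive terms get close to each other, for
finite `G` that `u` is a Cauchy sequence. -/
def AsymptoticallyConstantBetween {E : Type*} [PseudoMetricSpace E] (G : Set ℕ) (u : ℕ → E) :
    Prop :=
  ∀ ε > 0, ∀ᶠ m in atTop, ∀ k, m ≤ k → (∀ j ∈ Set.Ioo m k, j ∉ G) → dist (u k) (u m) ≤ ε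

namespace AsymptoticallyConstantBetween

variable {E F : Type*} {G : Set ℕ}

section PseudoMetricSpace

variable [PseudoMetricSpace E] [PseudoMetricSpace F] {u : ℕ → E}

theorem univ (hu : Tendsto (fun k => dist (u (k + 1)) (u k)) atTop (𝓝 0)) :
    AsymptoticallyConstantBetween Set.univ u := by
  intro ε hε
  filter_upwards [hu.eventually_le_const hε] with m hm k hmk hgap
  rcases hmk.eq_or_lt with rfl | hlt
  · simpa using hε.le
  · obtain rfl : k = m + 1 := by
      by_contra hne
      exact hgap (m + 1) ⟨m.lt_succ_self, by omega⟩ (Set.mem_univ _)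
    exact hm

theorem tendsto_dist {ι : Type*} {l : Filter ι} {m k : ι → ℕ}
    (hu : AsymptoticallyConstantBetween G u) (hm : Tendsto m l atTop)
    (hmk : ∀ᶠ i in l, m i ≤ k i ∧ ∀ j ∈ Set.Ioo (m i) (k i), j ∉ G) :
    Tendsto (fun i => dist (u (k i)) (u (m i))) l (𝓝 0) := by
  refine Metric.tendsto_nhds.2 fun ε hε => ?_
  filter_upwards [hm.eventually (hu (ε / 2) (half_pos hε)), hmk] with i hi hmki
  rw [Real.dist_0_eq_abs, abs_of_nonneg dist_nonneg]
  exact (hi _ hmki.1 hmki.2).trans_lt (half_lt_self hε)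

theorem comp_uniformContinuous {f : E → F} (hu : AsymptoticallyConstantBetween G u)
    (hf : UniformContinuous f) : AsymptoticallyConstantBetween G (f ∘ u) := by
  intro ε hε
  obtain ⟨η, hη, hfη⟩ := Metric.uniformContinuous_iff.1 hf ε hε
  filter_upwards [hu (η / 2) (half_pos hη)] with m hm k hmk hgap
  exact (hfη ((hm k hmk hgap).trans_lt (half_lt_self hη))).le

theorem cauchySeq (hu : AsymptoticallyConstantBetween G u) (hG : ¬∃ᶠ k in atTop, k ∈ G) :
    CauchySeq u := by
  refine Metric.cauchySeq_iff'.2 fun ε hε => ?_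
  obtain ⟨N, hN⟩ := eventually_atTop.1 (not_frequently.1 hG)
  obtain ⟨m, hm, hNm⟩ := ((hu (ε / 2) (half_pos hε)).and (eventually_ge_atTop N)).exists
  exact ⟨m, fun k hmk => (hm k hmk fun j hj => hN j (hNm.trans hj.1.le)).trans_lt (half_lt_self hε)⟩

theorem of_telescoping {e w r : ℕ → ℝ} {W R : ℝ}
    (hu : ∀ j, dist (u (j + 1)) (u j) ≤ e j * w j) (he : Tendsto e atTop (𝓝 0))
    (hw : ∀ j, w j ∈ Set.Icc 0 W) (hr : ∀ j, r j ∈ Set.Icc 0 R)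
    (hwr : ∀ j, j + 1 ∉ G → w j ≤ r j - r (j + 1)) : AsymptoticallyConstantBetween G u := by
  intro ε hε
  have hW : 0 ≤ W := (hw 0).1.trans (hw 0).2
  have hR : 0 ≤ R := (hr 0).1.trans (hr 0).2
  set η := ε / (R + W + 1)
  have hη : 0 < η := by positivity
  have hηε : η * (R + W) ≤ ε := by
    rw [div_mul_eq_mul_div, div_le_iff₀ (by positivity)]
    nlinarith
  obtain ⟨N, hN⟩ := eventually_atTop.1 (he.eventually_le_const hη)
  have hstep : ∀ j ≥ N, dist (u (j + 1)) (u j) ≤ η * w j := fun j hj =>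
    (hu j).trans (mul_le_mul_of_nonneg_right (hN j hj) (hw j).1)
  filter_upwards [eventually_ge_atTop N] with m hNm k hmk hgap
  have hsum : ∀ n, m ≤ n → n < k → dist (u n) (u m) ≤ η * (r m - r n) := by
    intro n hmn
    induction n, hmn using Nat.le_induction with
    | base => simp
    | succ n hmn ih =>
      intro hnk
      have hwn := hwr n (hgap (n + 1) ⟨by omega, hnk⟩)
      nlinarith [ih (by omega), hstep n (hNm.trans hmn), dist_triangle (u (n + 1)) (u n) (u m)]
  rcases hmk.eq_or_lt with rfl | hlt
  · simpa using hε.le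
  obtain ⟨n, rfl⟩ : ∃ n, k = n + 1 := ⟨k - 1, by omega⟩
  nlinarith [hsum n (by omega) (by omega), hstep n (by omega), (hr m).2, (hr n).1, (hw n).2,
    dist_triangle (u (n + 1)) (u n) (u m)]

end PseudoMetricSpace

theorem of_comp [MetricSpace E] [ProperSpace E] [MetricSpace F] {u : ℕ → E} {f : E → F}
    (hbdd : Bornology.IsBounded (Set.range u)) (hf : Continuous f)
    (hfu : AsymptoticallyConstantBetween G (f ∘ u))
    (hinj : Set.InjOn f {p | MapClusterPt p atTop u}) : AsymptoticallyConstantBetween G u := by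
  intro ε hε
  by_contra hcon
  obtain ⟨φ, hφ, hfar⟩ := extraction_of_frequently_atTop (not_eventually.1 hcon)
  push Not at hfar
  choose k hφk hgap hdist using hfar
  obtain ⟨⟨p, q⟩, -, ψ, hψ, hlim⟩ := tendsto_subseq_of_bounded (hbdd.prod hbdd)
    (x := fun i => (u (φ i), u (k i))) fun i => ⟨⟨φ i, rfl⟩, ⟨k i, rfl⟩⟩
  have hm : Tendsto (φ ∘ ψ) atTop atTop := (hφ.comp hψ).tendsto_atTop
  have hk : Tendsto (k ∘ ψ) atTop atTop := tendsto_atTop_mono (fun i => hφk (ψ i)) hm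
  have hp : Tendsto (u ∘ φ ∘ ψ) atTop (𝓝 p) := (continuous_fst.tendsto _).comp hlim
  have hq : Tendsto (u ∘ k ∘ ψ) atTop (𝓝 q) := (continuous_snd.tendsto _).comp hlim
  have hfpq : dist (f q) (f p) = 0 := tendsto_nhds_unique
    (((hf.tendsto q).comp hq).dist ((hf.tendsto p).comp hp))
    (hfu.tendsto_dist hm (Eventually.of_forall fun i => ⟨hφk (ψ i), hgap (ψ i)⟩))
  have hpq : q = p := hinj (hq.mapClusterPt.of_comp hk) (hp.mapClusterPt.of_comp hm)
    (dist_eq_zero.1 hfpq)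
  have hεdist : ε ≤ dist q p :=
    ge_of_tendsto (hq.dist hp) (Eventually.of_forall fun i => (hdist (ψ i)).le)
  rw [hpq, dist_self] at hεdist
  exact hεdist.not_gt hε

end AsymptoticallyConstantBetween

theorem exists_bracketing {G : Set ℕ} (hG : ∃ᶠ k in atTop, k ∈ G) :
    ∃ m n : ℕ → ℕ, Tendsto m atTop (atTop ⊓ 𝓟 G) ∧ Tendsto n atTop (atTop ⊓ 𝓟 G) ∧
      ∀ k, m k ≤ k ∧ k < n k ∧ ∀ j ∈ Set.Ioo (m k) (n k), j ∉ G := by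
  classical
  have hnext : ∀ k, ∃ n, k < n ∧ n ∈ G := fun k => frequently_atTop'.1 hG k
  refine ⟨Nat.findGreatest (· ∈ G), fun k => Nat.find (hnext k), ?_, ?_, fun k =>
    ⟨Nat.findGreatest_le k, (Nat.find_spec (hnext k)).1, fun j hj hjG => ?_⟩⟩
  · refine tendsto_inf.2 ⟨tendsto_atTop.2 fun M => ?_, tendsto_principal.2 ?_⟩
    · obtain ⟨m, hMm, hm⟩ := frequently_atTop.1 hG M
      filter_upwards [eventually_ge_atTop m] with k hk
      exact hMm.trans (Nat.le_findGreatest hk hm)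
    · obtain ⟨m, hm⟩ := hG.exists
      filter_upwards [eventually_ge_atTop m] with k hk
      exact Nat.findGreatest_spec (P := (· ∈ G)) hk hm
  · exact tendsto_inf.2
      ⟨tendsto_atTop_mono (fun k => (Nat.find_spec (hnext k)).1.le) tendsto_id,
        tendsto_principal.2 (Eventually.of_forall fun k => (Nat.find_spec (hnext k)).2)⟩
  · rcases le_or_gt j k with hjk | hkj
    · exact Nat.findGreatest_is_greatest hj.1 hjk hjG
    · exact Nat.find_min (hnext k) hj.2 ⟨hkj, hjG⟩

variable {p s α : ℕ → ℝ} {A L γ : ℝ} {G : Set ℕ}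

theorem tendsto_average_sub_of_bracketing {m n : ℕ → ℕ} (hα : ∀ k, α k ∈ Set.Icc (0 : ℝ) 1)
    (hs : ∀ k, s (k + 1) = (1 - α k) * s k + α k * p k) (hp : AsymptoticallyConstantBetween G p)
    (hm : Tendsto m atTop atTop)
    (hmn : ∀ k, m k ≤ k ∧ k < n k ∧ ∀ j ∈ Set.Ioo (m k) (n k), j ∉ G)
    (hsn : Tendsto (fun k => s (n k) - s (m k)) atTop (𝓝 0)) :
    Tendsto (fun k => s k - s (m k)) atTop (𝓝 0) := by
  refine Metric.tendsto_nhds.2 fun ε hε => ?_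
  filter_upwards [hm.eventually (hp (ε / 4) (by positivity)),
    Metric.tendsto_nhds.1 hsn (ε / 4) (by positivity)] with k hpk hsnk
  have hmem : ∀ j ∈ Set.Ico (m k) (n k),
      p j ∈ Set.Icc (p (m k) - ε / 4) (p (m k) + ε / 4) := fun j hj =>
    Real.closedBall_eq_Icc (x := p (m k)) ▸
      hpk j hj.1 fun i hi => (hmn k).2.2 i ⟨hi.1, hi.2.trans hj.2⟩
  have hbound := abs_average_sub_le_of_mem_Icc hα hs (hmn k).1 (hmn k).2.1.le hmem
  rw [show p (m k) + ε / 4 - (p (m k) - ε / 4) = ε / 2 by ring, abs_of_pos (half_pos hε)] at hbound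
  rw [Real.dist_0_eq_abs] at hsnk ⊢
  linarith

theorem tendsto_add_mul_of_tendsto_along (hα : ∀ k, α k ∈ Set.Icc (0 : ℝ) 1)
    (hs : ∀ k, s (k + 1) = (1 - α k) * s k + α k * p k) (hγ : γ ≠ 0)
    (hG : ∃ᶠ k in atTop, k ∈ G) (hp : AsymptoticallyConstantBetween G p)
    (hL : Tendsto (fun k => p k + γ * s k) (atTop ⊓ 𝓟 G) (𝓝 L)) :
    Tendsto (fun k => p k + γ * s k) atTop (𝓝 L) := by
  obtain ⟨m, n, hm, hn, hmn⟩ := exists_bracketing hG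
  have hm' : Tendsto m atTop atTop := hm.mono_right inf_le_left
  have hpk : Tendsto (fun k => p k - p (m k)) atTop (𝓝 0) :=
    tendsto_zero_iff_abs_tendsto_zero _ |>.2 <| hp.tendsto_dist hm' <| Eventually.of_forall fun k =>
      ⟨(hmn k).1, fun j hj => (hmn k).2.2 j ⟨hj.1, hj.2.trans (hmn k).2.1⟩⟩
  have hpn : Tendsto (fun k => p (n k) - p (m k)) atTop (𝓝 0) :=
    tendsto_zero_iff_abs_tendsto_zero _ |>.2 <| hp.tendsto_dist hm' <| Eventually.of_forall fun k =>
      ⟨(hmn k).1.trans (hmn k).2.1.le, (hmn k).2.2⟩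
  have hsn : Tendsto (fun k => s (n k) - s (m k)) atTop (𝓝 0) := by
    have := ((((hL.comp hn).sub (hL.comp hm)).sub hpn).const_mul γ⁻¹)
    rw [sub_self, sub_zero, mul_zero] at this
    refine this.congr fun k => ?_
    simp only [Function.comp]
    field_simp
    ring
  have hsk := tendsto_average_sub_of_bracketing hα hs hp hm' hmn hsn
  have := (hL.comp hm).add (hpk.add (hsk.const_mul γ))
  rw [mul_zero, add_zero, add_zero] at this
  exact this.congr fun k => by simp only [Function.comp]; ring

theorem exists_tendsto_of_tendsto_add_mul (hα : ∀ k, α k ∈ Set.Icc (0 : ℝ) 1)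
    (hαA : Tendsto α atTop (𝓝 A)) (hs : ∀ k, s (k + 1) = (1 - α k) * s k + α k * p k)
    (hL : Tendsto (fun k => p k + (1 - α k) * s k) atTop (𝓝 L)) :
    ∃ P, Tendsto p atTop (𝓝 P) := by
  have hα2 : ∀ k, 0 < 2 - α k := fun k => by linarith [(hα k).2]
  have hA : A ≤ 1 := le_of_tendsto' hαA fun k => (hα k).2
  have hquot : Tendsto (fun k => (p k + (1 - α k) * s k) / (2 - α k)) atTop (𝓝 (L / (2 - A))) :=
    hL.div (hαA.const_sub 2) (by linarith)
  -- Eliminating `p` turns the recursion into an averaging with weight `α (2 - α) = 1 - (1 - α)²`.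
  obtain ⟨S, hS⟩ := exists_tendsto_of_average (s := s) (lam := fun k => α k * (2 - α k))
    (fun k => ⟨mul_nonneg (hα k).1 (hα2 k).le, by nlinarith [sq_nonneg (1 - α k)]⟩)
    (fun k => by have := (hα2 k).ne'; rw [hs k]; field_simp; ring) hquot
  exact ⟨_, (hL.sub ((hαA.const_sub 1).mul hS)).congr fun k => add_sub_cancel_right _ _⟩

theorem exists_tendsto_of_tendsto_along (hα : ∀ k, α k ∈ Set.Icc (0 : ℝ) 1)
    (hαA : Tendsto α atTop (𝓝 A)) (hA : A < 1)
    (hs : ∀ k, s (k + 1) = (1 - α k) * s k + α k * p k)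
    (hbdd : Bornology.IsBounded (Set.range s)) (hG : ∃ᶠ k in atTop, k ∈ G)
    (hp : AsymptoticallyConstantBetween G p)
    (hL : Tendsto (fun k => p k + (1 - α k) * s k) (atTop ⊓ 𝓟 G) (𝓝 L)) :
    ∃ P, Tendsto p atTop (𝓝 P) := by
  have hsmall : Tendsto (fun k => (α k - A) * s k) atTop (𝓝 0) := by
    obtain ⟨C, hC⟩ := hbdd.exists_norm_le
    exact Tendsto.zero_mul_isBoundedUnder_le (by simpa using hαA.sub_const A)
      (isBoundedUnder_of ⟨C, fun k => hC _ ⟨k, rfl⟩⟩)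
  have hLA : Tendsto (fun k => p k + (1 - A) * s k) (atTop ⊓ 𝓟 G) (𝓝 (L + 0)) :=
    (hL.add (hsmall.mono_left inf_le_left)).congr fun k => by ring
  have hlim := tendsto_add_mul_of_tendsto_along hα hs (sub_pos.2 hA).ne' hG hp hLA
  exact exists_tendsto_of_tendsto_add_mul hα hαA hs ((hlim.sub hsmall).congr fun k => by ring)

end AsymptoticallyConstantBetween

section QuasiFejer

variable {E R ρ : ℕ → ℝ}

theorem exp_mul_add_le_of_quasiFejer (hE : ∀ k, 0 ≤ E k) (hR : ∀ k, 0 ≤ R k) (hρ : ∀ k, 0 ≤ ρ k)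
    (hstep : ∀ k, E (k + 1) + R k ≤ (1 + (ρ k - ρ (k + 1))) * E k) (k : ℕ) :
    Real.exp (ρ (k + 1)) * E (k + 1) + R k ≤ Real.exp (ρ k) * E k := by
  have hfactor : E (k + 1) + R k ≤ Real.exp (ρ k - ρ (k + 1)) * E k :=
    (hstep k).trans (mul_le_mul_of_nonneg_right
      (by linarith [Real.add_one_le_exp (ρ k - ρ (k + 1))]) (hE k))
  calc Real.exp (ρ (k + 1)) * E (k + 1) + R k
      ≤ Real.exp (ρ (k + 1)) * E (k + 1) + Real.exp (ρ (k + 1)) * R k := by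
        gcongr
        exact le_mul_of_one_le_left (hR k) (Real.one_le_exp (hρ _))
    _ = Real.exp (ρ (k + 1)) * (E (k + 1) + R k) := by ring
    _ ≤ Real.exp (ρ (k + 1)) * (Real.exp (ρ k - ρ (k + 1)) * E k) := by gcongr
    _ = Real.exp (ρ k) * E k := by rw [← mul_assoc, ← Real.exp_add, add_sub_cancel]

theorem tendsto_of_quasiFejer (hE : ∀ k, 0 ≤ E k) (hR : ∀ k, 0 ≤ R k) (hρ : ∀ k, 0 ≤ ρ k)
    (hanti : Antitone ρ) (hstep : ∀ k, E (k + 1) + R k ≤ (1 + (ρ k - ρ (k + 1))) * E k) :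
    (∃ l, Tendsto E atTop (𝓝 l)) ∧ Tendsto R atTop (𝓝 0) := by
  have hdecr := exp_mul_add_le_of_quasiFejer hE hR hρ hstep
  have hexpE := tendsto_atTop_ciInf (f := fun k => Real.exp (ρ k) * E k)
    (antitone_nat_of_succ_le fun k => by linarith [hdecr k, hR k])
    ⟨0, Set.forall_mem_range.2 fun k => mul_nonneg (Real.exp_pos _).le (hE k)⟩
  have hρlim := tendsto_atTop_ciInf hanti ⟨0, Set.forall_mem_range.2 hρ⟩
  constructor
  · refine ⟨_, (((Real.continuous_exp.tendsto _).comp hρlim.neg).mul hexpE).congr fun k => ?_⟩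
    rw [Function.comp_apply, ← mul_assoc, ← Real.exp_add, neg_add_cancel, Real.exp_zero, one_mul]
  · have hdiff := hexpE.sub (hexpE.comp (tendsto_add_atTop_nat 1))
    rw [sub_self] at hdiff
    exact squeeze_zero hR (fun k => le_sub_iff_add_le'.2 (hdecr k)) hdiff

theorem tendsto_zero_of_mul_sq_le {ι : Type*} {l : Filter ι} {c : ℝ} {r R : ι → ℝ} (hc : 0 < c)
    (hrR : ∀ i, c * r i ^ 2 ≤ R i) (hR : Tendsto R l (𝓝 0)) : Tendsto r l (𝓝 0) := by
  have hsq : Tendsto (fun i => r i ^ 2) l (𝓝 0) :=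
    squeeze_zero (fun i => sq_nonneg _) (fun i => (le_div_iff₀' hc).2 (hrR i))
      (by simpa using hR.div_const c)
  rw [tendsto_zero_iff_abs_tendsto_zero]
  simpa [Function.comp_def, Real.sqrt_sq_eq_abs] using (Real.continuous_sqrt.tendsto 0).comp hsq

end QuasiFejer

section ClusterPoints

variable {E : Type*}

theorem eq_of_mapClusterPt_of_tendsto [TopologicalSpace E] [T2Space E] {ι : Type*} {l : Filter ι}
    {u : ι → E} {p q : E} (hp : MapClusterPt p l u) (hq : Tendsto u l (𝓝 q)) : p = q :=
  eq_of_nhds_neBot (ClusterPt.mono hp hq)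

theorem exists_tendsto_of_mapClusterPt_unique [PseudoMetricSpace E] [ProperSpace E] {u : ℕ → E}
    (hbdd : Bornology.IsBounded (Set.range u))
    (huniq : ∀ p q, MapClusterPt p atTop u → MapClusterPt q atTop u → p = q) :
    ∃ p, Tendsto u atTop (𝓝 p) := by
  have hcompact := hbdd.isCompact_closure
  have hmem : ∀ᶠ k in atTop, u k ∈ closure (Set.range u) :=
    Eventually.of_forall fun k => subset_closure ⟨k, rfl⟩
  obtain ⟨p, -, hp⟩ := hcompact.exists_mapClusterPt (le_principal_iff.2 hmem)
  exact ⟨p, hcompact.tendsto_nhds_of_unique_mapClusterPt hmem fun q _ hq => huniq q p hq hp⟩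

theorem exists_ultrafilter_tendsto_of_mapClusterPt {ι F : Type*} [TopologicalSpace E]
    [PseudoMetricSpace F] [ProperSpace F] {l : Filter ι} {u : ι → E} {v : ι → F} {p : E}
    (hp : MapClusterPt p l u) (hv : Bornology.IsBounded (Set.range v)) :
    ∃ (U : Ultrafilter ι) (r : F), ↑U ≤ l ∧ Tendsto u U (𝓝 p) ∧ Tendsto v U (𝓝 r) := by
  obtain ⟨U, hUl, hU⟩ := mapClusterPt_iff_ultrafilter.1 hp
  obtain ⟨r, -, hr⟩ := hv.isCompact_closure.ultrafilter_le_nhds (U.map v)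
    (tendsto_principal.2 (Eventually.of_forall fun i => subset_closure ⟨i, rfl⟩))
  exact ⟨U, r, hUl, hU, hr⟩

end ClusterPoints

section AggDistSq

variable {E : Type*} [NormedAddCommGroup E]

/-- The squared distance to `p` of the pair formed by an iterate `u` and the running average `v`
that follows it, with the weights `1 - c` and `1` for which it is nearly nonincreasing along the
iteration. -/
def aggDistSq (c : ℝ) (u v p : E) : ℝ :=
  (1 - c) * ‖u - p‖ ^ 2 + ‖v - p‖ ^ 2

theorem aggDistSq_nonneg {c : ℝ} (hc : c ≤ 1) (u v p : E) : 0 ≤ aggDistSq c u v p := by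
  have := sub_nonneg.2 hc
  unfold aggDistSq
  positivity

theorem isBounded_range_of_bddAbove_aggDistSq {c : ℕ → ℝ} {c₀ : ℝ} {u v : ℕ → E} {p : E}
    (hc : ∀ k, c k ≤ c₀) (hc₀ : c₀ < 1)
    (hbdd : BddAbove (Set.range fun k => aggDistSq (c k) (u k) (v k) p)) :
    Bornology.IsBounded (Set.range u) := by
  obtain ⟨M, hM⟩ := hbdd
  refine (Metric.isBounded_closedBall (x := p) (r := √(M / (1 - c₀)))).subset
    (Set.range_subset_iff.2 fun k => ?_)
  have hk : (1 - c₀) * ‖u k - p‖ ^ 2 ≤ M :=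
    calc (1 - c₀) * ‖u k - p‖ ^ 2 ≤ (1 - c k) * ‖u k - p‖ ^ 2 := by gcongr; exact hc k
      _ ≤ aggDistSq (c k) (u k) (v k) p := le_add_of_nonneg_right (sq_nonneg _)
      _ ≤ M := hM ⟨k, rfl⟩
  rw [mem_closedBall_iff_norm]
  exact Real.le_sqrt_of_sq_le ((le_div_iff₀' (sub_pos.2 hc₀)).2 hk)

end AggDistSq

section InnerProductSpace

variable {E : Type*} [NormedAddCommGroup E] [InnerProductSpace ℝ E]

theorem norm_add_smul_sub_sq (z v w : E) (t : ℝ) :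
    ‖z + t • v - w‖ ^ 2 = ‖z - w‖ ^ 2 + 2 * t * ⟪z - w, v⟫ + t ^ 2 * ‖v‖ ^ 2 := by
  rw [add_sub_right_comm, norm_add_sq_real, real_inner_smul_right, norm_smul, mul_pow,
    Real.norm_eq_abs, sq_abs]
  ring

theorem IsProx.mul_sub_le_inner_add {τ t : ℝ} {f : E → ℝ} {w z : E} (hz : IsProx τ f w z)
    (hτ : 0 < τ) (hf : ConvexOn ℝ Set.univ f) (u : E) (ht : t ∈ Set.Ioc (0 : ℝ) 1) :
    τ * (f z - f u) ≤ ⟪z - w, u - z⟫ + t * (‖u - z‖ ^ 2 / 2) := by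
  have hprox := hz (z + t • (u - z))
  have hconv : f (z + t • (u - z)) ≤ (1 - t) * f z + t * f u := by
    have := hf.2 (Set.mem_univ z) (Set.mem_univ u) (sub_nonneg.2 ht.2) ht.1.le (sub_add_cancel _ _)
    rwa [show (1 - t) • z + t • u = z + t • (u - z) by module] at this
  rw [norm_add_smul_sub_sq, add_assoc (‖z - w‖ ^ 2), add_div] at hprox
  have hscaled : t * (f z - f u) ≤
      (2 * t * ⟪z - w, u - z⟫ + t ^ 2 * ‖u - z‖ ^ 2) / (2 * τ) := by linarith
  rw [le_div_iff₀ (by positivity)] at hscaled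
  refine le_of_mul_le_mul_left ?_ ht.1
  linarith

theorem IsProx.mul_sub_le_inner {τ : ℝ} {f : E → ℝ} {w z : E} (hz : IsProx τ f w z) (hτ : 0 < τ)
    (hf : ConvexOn ℝ Set.univ f) (u : E) : τ * (f z - f u) ≤ ⟪z - w, u - z⟫ := by
  have hlim : Tendsto (fun t : ℝ => ⟪z - w, u - z⟫ + t * (‖u - z‖ ^ 2 / 2)) (𝓝[>] 0)
      (𝓝 (⟪z - w, u - z⟫ + 0 * (‖u - z‖ ^ 2 / 2))) :=
    Continuous.tendsto (by fun_prop) 0 |>.mono_left nhdsWithin_le_nhds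
  rw [zero_mul, add_zero] at hlim
  refine ge_of_tendsto hlim ?_
  filter_upwards [Ioc_mem_nhdsGT one_pos] with t ht
  exact hz.mul_sub_le_inner_add hτ hf u ht

theorem sub_le_inner_of_tendsto_of_isProx {ι : Type*} {l : Filter ι} [l.NeBot] {f : E → ℝ}
    {t : ι → ℝ} {tmin : ℝ} {z md ξ : ι → E} {z₀ ξ₀ : E} (hf : ConvexOn ℝ Set.univ f)
    (hfc : Continuous f) (htmin : 0 < tmin) (ht : ∀ i, tmin ≤ t i)
    (hprox : ∀ i, IsProx (t i) f (md i + t i • ξ i) (z i)) (hz : Tendsto z l (𝓝 z₀))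
    (hξ : Tendsto ξ l (𝓝 ξ₀)) (hmd : Tendsto (fun i => z i - md i) l (𝓝 0)) (u : E) :
    f z₀ - f u ≤ ⟪ξ₀, z₀ - u⟫ := by
  have hbound : ∀ i, f (z i) - f u ≤ tmin⁻¹ * (‖z i - md i‖ * ‖u - z i‖) + ⟪ξ i, z i - u⟫ := by
    intro i
    have htpos : 0 < t i := htmin.trans_le (ht i)
    have hvar := (hprox i).mul_sub_le_inner htpos hf u
    rw [← sub_sub, inner_sub_left, real_inner_smul_left, ← neg_sub (z i) u, inner_neg_right (ξ i),
      neg_sub] at hvar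
    have hdiv : f (z i) - f u - ⟪ξ i, z i - u⟫ ≤ (t i)⁻¹ * (‖z i - md i‖ * ‖u - z i‖) := by
      rw [le_inv_mul_iff₀ htpos]
      linarith [real_inner_le_norm (z i - md i) (u - z i)]
    have hinv : (t i)⁻¹ * (‖z i - md i‖ * ‖u - z i‖) ≤ tmin⁻¹ * (‖z i - md i‖ * ‖u - z i‖) := by
      gcongr
      exact ht i
    linarith
  have hlim : Tendsto (fun i => tmin⁻¹ * (‖z i - md i‖ * ‖u - z i‖) + ⟪ξ i, z i - u⟫) l
      (𝓝 (tmin⁻¹ * (‖(0 : E)‖ * ‖u - z₀‖) + ⟪ξ₀, z₀ - u⟫)) :=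
    ((hmd.norm.mul (hz.const_sub u).norm).const_mul _).add (hξ.inner (hz.sub_const u))
  rw [norm_zero, zero_mul, mul_zero, zero_add] at hlim
  exact le_of_tendsto_of_tendsto' (((hfc.tendsto z₀).comp hz).sub_const _) hlim hbound

theorem two_mul_inner_sub_combo (c : ℝ) (z w v p : E) :
    2 * ⟪z - ((1 - c) • w + c • v), p - z⟫ = (1 - c) * ‖w - p‖ ^ 2 + c * ‖v - p‖ ^ 2
      - ‖z - p‖ ^ 2 - (1 - c) * ‖z - w‖ ^ 2 - c * ‖z - v‖ ^ 2 := by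
  rw [show z - ((1 - c) • w + c • v) = (1 - c) • (z - w) + c • (z - v) by module,
    show w - p = -((z - w) + (p - z)) by abel, show v - p = -((z - v) + (p - z)) by abel,
    norm_neg, norm_neg, norm_sub_rev z p, norm_add_sq_real, norm_add_sq_real, inner_add_left,
    real_inner_smul_left, real_inner_smul_left]
  ring

theorem norm_combo_sub_sq (c : ℝ) (v z p : E) :
    ‖((1 - c) • v + c • z) - p‖ ^ 2 =
      (1 - c) * ‖v - p‖ ^ 2 + c * ‖z - p‖ ^ 2 - c * (1 - c) * ‖z - v‖ ^ 2 := by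
  rw [show ((1 - c) • v + c • z) - p = (v - p) + c • (z - v) by module,
    show z - p = (v - p) + (z - v) by abel, norm_add_sq_real, norm_add_sq_real (v - p) (z - v),
    real_inner_smul_right, norm_smul, mul_pow, Real.norm_eq_abs, sq_abs]
  ring

theorem aggDistSq_step_le {c c' : ℝ} (hc : c ≤ 1) (hc' : c' ≤ c) (z w v p : E) :
    2 * ⟪z - ((1 - c) • w + c • v), p - z⟫ + aggDistSq c' z ((1 - c') • v + c' • z) p
        + (1 - c) * ‖z - w‖ ^ 2 + (c + c' * (1 - c')) * ‖z - v‖ ^ 2 ≤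
      (1 + (c - c')) * aggDistSq c w v p := by
  have hw : 0 ≤ (c - c') * ((1 - c) * ‖w - p‖ ^ 2) :=
    mul_nonneg (sub_nonneg.2 hc') (mul_nonneg (sub_nonneg.2 hc) (sq_nonneg _))
  rw [two_mul_inner_sub_combo, aggDistSq, aggDistSq, norm_combo_sub_sq]
  linarith

theorem aggDistSq_sub_aggDistSq (c : ℝ) (u v p q : E) :
    aggDistSq c u ((1 - c) • v + c • u) p - aggDistSq c u ((1 - c) • v + c • u) q =
      -2 * (⟪p - q, u⟫ + (1 - c) * ⟪p - q, v⟫) + (2 - c) * (‖p‖ ^ 2 - ‖q‖ ^ 2) := by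
  simp only [aggDistSq, norm_sub_sq_real, inner_sub_left, inner_add_left, real_inner_smul_left,
    real_inner_comm _ p, real_inner_comm _ q]
  ring

theorem eq_of_mapClusterPt_of_tendsto_aggDistSq_sub {u v : ℕ → E} {α : ℕ → ℝ} {A L : ℝ}
    {G : Set ℕ} {p q : E} (hα : ∀ k, α k ∈ Set.Icc (0 : ℝ) 1) (hαA : Tendsto α atTop (𝓝 A))
    (hA : A < 1) (hv : ∀ k, v (k + 1) = (1 - α k) • v k + α k • u k)
    (hbdd : Bornology.IsBounded (Set.range u)) (hG : ∃ᶠ k in atTop, k ∈ G)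
    (hu : AsymptoticallyConstantBetween G u)
    (hL : Tendsto (fun k => aggDistSq (α k) (u k) (v (k + 1)) p -
      aggDistSq (α k) (u k) (v (k + 1)) q) (atTop ⊓ 𝓟 G) (𝓝 L))
    (hp : MapClusterPt p atTop u) (hq : MapClusterPt q atTop u) : p = q := by
  have hinner : Continuous fun z : E => ⟪p - q, z⟫ := by fun_prop
  have hcombo : Tendsto (fun k => ⟪p - q, u k⟫ + (1 - α k) * ⟪p - q, v k⟫) (atTop ⊓ 𝓟 G)
      (𝓝 (((2 - A) * (‖p‖ ^ 2 - ‖q‖ ^ 2) - L) / 2)) := by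
    refine (((((hαA.const_sub 2).mul_const _).mono_left inf_le_left).sub hL).div_const 2).congr
      fun k => ?_
    rw [hv, aggDistSq_sub_aggDistSq]
    ring
  obtain ⟨P, hP⟩ := exists_tendsto_of_tendsto_along (p := fun k => ⟪p - q, u k⟫)
    (s := fun k => ⟪p - q, v k⟫) hα hαA hA
    (fun k => by rw [hv, inner_add_right, real_inner_smul_right, real_inner_smul_right])
    (by
      rw [Set.range_comp' (fun z : E => ⟪p - q, z⟫) v]
      exact (innerSL ℝ (p - q)).lipschitz.isBounded_image
        (isBounded_range_of_average hα hv hbdd))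
    hG (hu.comp_uniformContinuous (innerSL ℝ (p - q)).uniformContinuous) hcombo
  have hpP := eq_of_mapClusterPt_of_tendsto (hp.continuousAt_comp hinner.continuousAt) hP
  have hqP := eq_of_mapClusterPt_of_tendsto (hq.continuousAt_comp hinner.continuousAt) hP
  rw [← sub_eq_zero, ← inner_self_eq_zero (𝕜 := ℝ), inner_sub_right, hpP, hqP, sub_self]

theorem two_mul_inner_extrapolation_le {c θ θmax : ℝ} (hc : 0 ≤ c) (hθ : 0 ≤ θ) (hθmax : θ ≤ θmax)
    (xm x xp v : E) :
    2 * θ * ⟪x - ((1 - c) • xm + c • v), xp - (x + θ • (x - xm))⟫ ≤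
      (1 - c) * (‖xp - x‖ ^ 2 - (θ * ‖x - xm‖) ^ 2 - ‖xp - (x + θ • (x - xm))‖ ^ 2)
        + c * (‖x - v‖ ^ 2 + θmax ^ 2 * ‖xp - (x + θ • (x - xm))‖ ^ 2) := by
  set d := xp - (x + θ • (x - xm)) with hd
  have hyoung : 2 * θ * ⟪x - v, d⟫ ≤ ‖x - v‖ ^ 2 + θmax ^ 2 * ‖d‖ ^ 2 := by
    have hmax : θ ^ 2 * ‖d‖ ^ 2 ≤ θmax ^ 2 * ‖d‖ ^ 2 := by gcongr
    nlinarith [real_inner_le_norm (x - v) d, sq_nonneg (‖x - v‖ - θ * ‖d‖)]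
  have hnorm : ‖xp - x‖ ^ 2 = ‖d‖ ^ 2 + 2 * θ * ⟪x - xm, d⟫ + (θ * ‖x - xm‖) ^ 2 := by
    rw [show xp - x = d + θ • (x - xm) by rw [hd]; module, norm_add_sq_real, real_inner_smul_right,
      norm_smul, Real.norm_of_nonneg hθ, real_inner_comm]
    ring
  rw [show x - ((1 - c) • xm + c • v) = (1 - c) • (x - xm) + c • (x - v) by module, hnorm,
    inner_add_left, real_inner_smul_left, real_inner_smul_left]
  nlinarith [mul_le_mul_of_nonneg_left hyoung hc]

end InnerProductSpace

section SaddlePoints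

variable {X Y : Type*} [NormedAddCommGroup X] [InnerProductSpace ℝ X]
  [NormedAddCommGroup Y] [InnerProductSpace ℝ Y]
  {g : X → ℝ} {h : Y → ℝ} {K : X →L[ℝ] Y} {p q : X} {r s : Y}

/-- The primal half `L(z, yh) - L(xh, yh)` of the primal-dual gap at `(xh, yh)`. -/
def primalGap (g : X → ℝ) (K : X →L[ℝ] Y) (xh : X) (yh : Y) (z : X) : ℝ :=
  g z - g xh + ⟪K (z - xh), yh⟫

theorem IsSaddlePoint.primalGap_nonneg (hs : IsSaddlePoint g h K p r) (z : X) :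
    0 ≤ primalGap g K p r z := by
  rw [primalGap, map_sub, inner_sub_left]
  linarith [(hs z r).2]

theorem IsSaddlePoint.dualGap_nonneg (hs : IsSaddlePoint g h K p r) (y : Y) :
    0 ≤ h y - h r - ⟪K p, y - r⟫ := by
  rw [inner_sub_right]
  linarith [(hs p y).1]

theorem IsSaddlePoint.exchange (h₁ : IsSaddlePoint g h K p r) (h₂ : IsSaddlePoint g h K q s) :
    IsSaddlePoint g h K q r := fun x y =>
  ⟨by linarith [(h₂ p y).1, (h₂ p r).2, (h₁ q s).1, (h₁ q s).2, (h₂ p r).1],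
    by linarith [(h₁ x s).2, (h₁ x s).1, (h₂ p r).1, (h₂ p r).2]⟩

theorem IsSaddlePoint.primalGap_eq (hp : IsSaddlePoint g h K p r) (hq : IsSaddlePoint g h K q r) :
    primalGap g K p r = primalGap g K q r := by
  funext z
  simp only [primalGap, map_sub, inner_sub_left]
  linarith [(hp q r).2, (hq p r).2]

end SaddlePoints

/-- A run of the NPDAL iteration for the saddle function `g x + ⟪K x, y⟫ - h y`: parameters,
accepted stepsizes and iterates. Zero weights `a`, `b` are allowed and give the linesearch method
without averaging. Indices follow the paper, so `y 0`, `yag 0`, `ymd 0`, `ymd 1`, `xmd 0` and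
`xbar 0` are junk. -/
structure NPDALRun {X Y : Type*}
    [NormedAddCommGroup X] [InnerProductSpace ℝ X] [CompleteSpace X]
    [NormedAddCommGroup Y] [InnerProductSpace ℝ Y] [CompleteSpace Y]
    (g : X → ℝ) (h : Y → ℝ) (K : X →L[ℝ] Y) where
  (a b τ θ : ℕ → ℝ)
  (β δ θmax τmin : ℝ)
  (x xag xmd xbar : ℕ → X)
  (y yag ymd : ℕ → Y)
  convexOn_g : ConvexOn ℝ Set.univ g
  convexOn_h : ConvexOn ℝ Set.univ h
  a_mem : ∀ k, a k ∈ Set.Ico (0 : ℝ) 1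
  b_mem : ∀ k, b k ∈ Set.Ico (0 : ℝ) 1
  antitone_a : Antitone a
  antitone_b : Antitone b
  β_pos : 0 < β
  δ_nonneg : 0 ≤ δ
  a_zero_lt : δ + θmax ^ 2 * a 0 + a 0 < 1
  b_zero_lt : δ + b 0 < 1
  θ_zero_pos : 0 < θ 0
  θ_succ : ∀ k, θ (k + 1) = τ (k + 1) / τ k
  τ_succ_le : ∀ k, τ (k + 1) ≤ τ k * √(1 + θ k)
  θ_le : ∀ k, θ k ≤ θmax
  τmin_pos : 0 < τmin
  τmin_le : ∀ k, τmin ≤ τ k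
  xag_succ : ∀ k, xag (k + 1) = (1 - a (k + 1)) • xag k + a (k + 1) • x k
  xmd_succ : ∀ k, xmd (k + 1) = (1 - a (k + 1)) • x k + a (k + 1) • xag (k + 1)
  isProx_x : ∀ k, IsProx (τ k) g
    (xmd (k + 1) - τ k • (ContinuousLinearMap.adjoint K) (y (k + 1))) (x (k + 1))
  xbar_succ : ∀ k, xbar (k + 1) = x (k + 1) + θ (k + 1) • (x (k + 1) - x k)
  yag_succ : ∀ k, yag (k + 2) = (1 - b (k + 2)) • yag (k + 1) + b (k + 2) • y (k + 1)
  ymd_succ : ∀ k, ymd (k + 2) = (1 - b (k + 2)) • y (k + 1) + b (k + 2) • yag (k + 2)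
  isProx_y : ∀ k, IsProx (β * τ (k + 1)) h
    (ymd (k + 2) + (β * τ (k + 1)) • K (xbar (k + 1))) (y (k + 2))
  linesearch : ∀ k, √β * τ (k + 1) *
      ‖(ContinuousLinearMap.adjoint K) (y (k + 2) - y (k + 1))‖ ≤ δ * ‖y (k + 2) - y (k + 1)‖

namespace NPDALRun

open ContinuousLinearMap (adjoint)

section General

variable {X Y : Type*}
  [NormedAddCommGroup X] [InnerProductSpace ℝ X] [CompleteSpace X]
  [NormedAddCommGroup Y] [InnerProductSpace ℝ Y] [CompleteSpace Y]
  {g : X → ℝ} {h : Y → ℝ} {K : X →L[ℝ] Y} (S : NPDALRun g h K) {xh : X} {yh : Y} (j : ℕ)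

theorem τ_pos : 0 < S.τ j := S.τmin_pos.trans_le (S.τmin_le j)

theorem θ_pos : ∀ j, 0 < S.θ j
  | 0 => S.θ_zero_pos
  | j + 1 => S.θ_succ j ▸ div_pos (S.τ_pos _) (S.τ_pos _)

theorem θmax_pos : 0 < S.θmax := (S.θ_pos 0).trans_le (S.θ_le 0)

theorem τ_succ : S.τ (j + 1) = S.θ (j + 1) * S.τ j := by
  rw [S.θ_succ, div_mul_cancel₀ _ (S.τ_pos j).ne']

theorem θ_succ_sq_le : S.θ (j + 1) ^ 2 ≤ 1 + S.θ j := by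
  have hle : S.θ (j + 1) ≤ √(1 + S.θ j) := by
    rw [S.θ_succ, div_le_iff₀' (S.τ_pos j)]
    exact S.τ_succ_le j
  exact (Real.le_sqrt' (S.θ_pos _)).1 hle

/-! ### The energy inequality -/

theorem primal_prox_le (u : X) :
    S.τ j * (g (S.x (j + 1)) - g u) ≤ ⟪S.x (j + 1) - S.xmd (j + 1), u - S.x (j + 1)⟫
      + S.τ j * ⟪K (u - S.x (j + 1)), S.y (j + 1)⟫ := by
  have hvar := (S.isProx_x j).mul_sub_le_inner (S.τ_pos j) S.convexOn_g u
  rwa [sub_sub_eq_add_sub, add_sub_right_comm, inner_add_left, real_inner_smul_left,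
    ContinuousLinearMap.adjoint_inner_left, real_inner_comm (K _)] at hvar

theorem dual_prox_le (v : Y) :
    S.τ (j + 1) * (h (S.y (j + 2)) - h v) ≤
      S.β⁻¹ * ⟪S.y (j + 2) - S.ymd (j + 2), v - S.y (j + 2)⟫
        - S.τ (j + 1) * ⟪K (S.xbar (j + 1)), v - S.y (j + 2)⟫ := by
  have hvar := (S.isProx_y j).mul_sub_le_inner (mul_pos S.β_pos (S.τ_pos _)) S.convexOn_h v
  rw [← sub_sub, inner_sub_left, real_inner_smul_left, mul_assoc, mul_assoc] at hvar
  have := mul_le_mul_of_nonneg_left hvar (inv_pos.2 S.β_pos).le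
  rwa [inv_mul_cancel_left₀ S.β_pos.ne', mul_sub S.β⁻¹, inv_mul_cancel_left₀ S.β_pos.ne'] at this

theorem extrapolated_prox_le :
    S.τ (j + 1) * ((1 + S.θ (j + 1)) * g (S.x (j + 1)) - g (S.x (j + 2))
        - S.θ (j + 1) * g (S.x j)) ≤
      S.θ (j + 1) * ⟪S.x (j + 1) - S.xmd (j + 1), S.x (j + 2) - S.xbar (j + 1)⟫
        + S.τ (j + 1) * ⟪K (S.x (j + 2) - S.xbar (j + 1)), S.y (j + 1)⟫ := by
  have hnext := mul_le_mul_of_nonneg_left (S.primal_prox_le j (S.x (j + 2))) (S.θ_pos (j + 1)).le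
  have hprev := mul_le_mul_of_nonneg_left (S.primal_prox_le j (S.x j)) (sq_nonneg (S.θ (j + 1)))
  have hdir : S.x (j + 2) - S.xbar (j + 1) =
      (S.x (j + 2) - S.x (j + 1)) + S.θ (j + 1) • (S.x j - S.x (j + 1)) := by
    rw [S.xbar_succ]; module
  rw [hdir, S.τ_succ j, inner_add_right, real_inner_smul_right, map_add, map_smul,
    inner_add_left, real_inner_smul_left]
  linarith

theorem linesearch_inner_le :
    -(S.τ (j + 1) * ⟪K (S.x (j + 2) - S.xbar (j + 1)), S.y (j + 2) - S.y (j + 1)⟫) ≤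
      S.δ / 2 * (S.β⁻¹ * ‖S.y (j + 2) - S.y (j + 1)‖ ^ 2 + ‖S.x (j + 2) - S.xbar (j + 1)‖ ^ 2) := by
  set d := S.x (j + 2) - S.xbar (j + 1)
  set e := S.y (j + 2) - S.y (j + 1)
  have hβ : 0 < √S.β := Real.sqrt_pos.2 S.β_pos
  have hadj : S.τ (j + 1) * ‖adjoint K e‖ ≤ S.δ * (‖e‖ / √S.β) := by
    rw [← mul_div_assoc, le_div_iff₀ hβ]
    linarith [S.linesearch j]
  have hsq : S.β⁻¹ * ‖e‖ ^ 2 = (‖e‖ / √S.β) ^ 2 := by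
    rw [div_pow, Real.sq_sqrt S.β_pos.le, inv_mul_eq_div]
  have hcs : -⟪K d, e⟫ ≤ ‖adjoint K e‖ * ‖d‖ := by
    rw [← ContinuousLinearMap.adjoint_inner_right, mul_comm]
    exact (neg_le_abs _).trans (abs_real_inner_le_norm _ _)
  calc -(S.τ (j + 1) * ⟪K d, e⟫) = S.τ (j + 1) * -⟪K d, e⟫ := by ring
    _ ≤ S.τ (j + 1) * (‖adjoint K e‖ * ‖d‖) := by gcongr; exact (S.τ_pos _).le
    _ = S.τ (j + 1) * ‖adjoint K e‖ * ‖d‖ := by ring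
    _ ≤ S.δ * (‖e‖ / √S.β) * ‖d‖ := by gcongr
    _ ≤ S.δ / 2 * ((‖e‖ / √S.β) ^ 2 + ‖d‖ ^ 2) := by
        nlinarith [mul_nonneg S.δ_nonneg (sq_nonneg (‖e‖ / √S.β - ‖d‖))]
    _ = _ := by rw [hsq]

theorem primalGap_step_le (hs : IsSaddlePoint g h K xh yh) :
    S.τ (j + 1) * ((1 + S.θ (j + 1)) * primalGap g K xh yh (S.x (j + 1))
        - S.θ (j + 1) * primalGap g K xh yh (S.x j)) ≤
      ⟪S.x (j + 2) - S.xmd (j + 2), xh - S.x (j + 2)⟫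
        + S.β⁻¹ * ⟪S.y (j + 2) - S.ymd (j + 2), yh - S.y (j + 2)⟫
        + S.θ (j + 1) * ⟪S.x (j + 1) - S.xmd (j + 1), S.x (j + 2) - S.xbar (j + 1)⟫
        + S.δ / 2 * (S.β⁻¹ * ‖S.y (j + 2) - S.y (j + 1)‖ ^ 2
          + ‖S.x (j + 2) - S.xbar (j + 1)‖ ^ 2) := by
  have hdual := mul_nonneg (S.τ_pos (j + 1)).le (hs.dualGap_nonneg (S.y (j + 2)))
  have hcross : (1 + S.θ (j + 1)) * ⟪K (S.x (j + 1) - xh), yh⟫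
      - S.θ (j + 1) * ⟪K (S.x j - xh), yh⟫ = ⟪K (S.xbar (j + 1) - xh), yh⟫ := by
    rw [show S.xbar (j + 1) - xh = (1 + S.θ (j + 1)) • (S.x (j + 1) - xh)
      - S.θ (j + 1) • (S.x j - xh) by rw [S.xbar_succ]; module, map_sub K (_ • _), map_smul,
      map_smul, inner_sub_left, real_inner_smul_left, real_inner_smul_left]
  have hx := S.primal_prox_le (j + 1) xh
  have hextra := S.extrapolated_prox_le j
  have hy := S.dual_prox_le j yh
  have hls := S.linesearch_inner_le j
  have hgap : S.τ (j + 1) * ((1 + S.θ (j + 1)) * primalGap g K xh yh (S.x (j + 1))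
      - S.θ (j + 1) * primalGap g K xh yh (S.x j)) =
      S.τ (j + 1) * ((1 + S.θ (j + 1)) * g (S.x (j + 1)) - S.θ (j + 1) * g (S.x j) - g xh
        + ⟪K (S.xbar (j + 1) - xh), yh⟫) := by
    rw [← hcross, primalGap, primalGap]; ring
  simp only [map_sub, inner_sub_left (K _), inner_sub_right (K _)] at *
  linarith

/-- The Lyapunov function of the iteration at the saddle point `(xh, yh)`. -/
noncomputable def energy (xh : X) (yh : Y) : ℝ :=
  aggDistSq (S.a (j + 2)) (S.x (j + 1)) (S.xag (j + 2)) xh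
    + S.a (j + 1) * ‖S.x (j + 1) - S.xag (j + 1)‖ ^ 2
    + S.β⁻¹ * aggDistSq (S.b (j + 2)) (S.y (j + 1)) (S.yag (j + 2)) yh
    + 2 * S.τ j * (1 + S.θ j) * primalGap g K xh yh (S.x j)

/-- The amount by which one iteration decreases the energy at `(xh, yh)`, up to the variation of
the weights. -/
noncomputable def residual (xh : X) (yh : Y) : ℝ :=
  (1 - S.a 0) * (S.θ (j + 1) * ‖S.x (j + 1) - S.x j‖) ^ 2
    + (1 - S.δ - S.θmax ^ 2 * S.a 0 - S.a 0) * ‖S.x (j + 2) - S.xbar (j + 1)‖ ^ 2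
    + (1 - S.a 0) * (S.a (j + 3) * ‖S.x (j + 2) - S.xag (j + 2)‖) ^ 2
    + S.β⁻¹ * (1 - S.δ - S.b 0) * ‖S.y (j + 2) - S.y (j + 1)‖ ^ 2
    + S.β⁻¹ * (S.b (j + 2) * ‖S.y (j + 2) - S.yag (j + 2)‖) ^ 2
    + 2 * S.τ j * (1 + S.θ j - S.θ (j + 1) ^ 2) * primalGap g K xh yh (S.x j)

theorem two_mul_primalGap_nonneg (hs : IsSaddlePoint g h K xh yh) :
    0 ≤ 2 * S.τ j * primalGap g K xh yh (S.x j) :=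
  mul_nonneg (mul_nonneg zero_le_two (S.τ_pos j).le) (hs.primalGap_nonneg _)

theorem terms_le_energy (hs : IsSaddlePoint g h K xh yh) :
    aggDistSq (S.a (j + 2)) (S.x (j + 1)) (S.xag (j + 2)) xh ≤ S.energy j xh yh ∧
      S.β⁻¹ * aggDistSq (S.b (j + 2)) (S.y (j + 1)) (S.yag (j + 2)) yh ≤ S.energy j xh yh := by
  have hx := aggDistSq_nonneg (S.a_mem (j + 2)).2.le (S.x (j + 1)) (S.xag (j + 2)) xh
  have hy := mul_nonneg (inv_pos.2 S.β_pos).le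
    (aggDistSq_nonneg (S.b_mem (j + 2)).2.le (S.y (j + 1)) (S.yag (j + 2)) yh)
  have hag := mul_nonneg (S.a_mem (j + 1)).1 (sq_nonneg ‖S.x (j + 1) - S.xag (j + 1)‖)
  have hgap := mul_nonneg (S.two_mul_primalGap_nonneg j hs) (add_pos one_pos (S.θ_pos j)).le
  unfold energy
  constructor <;> linarith

theorem energy_nonneg (hs : IsSaddlePoint g h K xh yh) : 0 ≤ S.energy j xh yh :=
  (aggDistSq_nonneg (S.a_mem (j + 2)).2.le _ _ _).trans (S.terms_le_energy j hs).1

theorem one_sub_a_pos : 0 < 1 - S.a 0 := sub_pos.2 (S.a_mem 0).2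

theorem extrapolation_coeff_pos : 0 < 1 - S.δ - S.θmax ^ 2 * S.a 0 - S.a 0 := by
  linarith [S.a_zero_lt]

theorem one_sub_δ_sub_b_pos : 0 < 1 - S.δ - S.b 0 := by
  linarith [S.b_zero_lt]

theorem terms_le_residual (hs : IsSaddlePoint g h K xh yh) :
    (1 - S.a 0) * (S.θ (j + 1) * ‖S.x (j + 1) - S.x j‖) ^ 2 ≤ S.residual j xh yh ∧
      (1 - S.δ - S.θmax ^ 2 * S.a 0 - S.a 0) * ‖S.x (j + 2) - S.xbar (j + 1)‖ ^ 2
        ≤ S.residual j xh yh ∧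
      (1 - S.a 0) * (S.a (j + 3) * ‖S.x (j + 2) - S.xag (j + 2)‖) ^ 2 ≤ S.residual j xh yh ∧
      S.β⁻¹ * (1 - S.δ - S.b 0) * ‖S.y (j + 2) - S.y (j + 1)‖ ^ 2 ≤ S.residual j xh yh ∧
      S.β⁻¹ * (S.b (j + 2) * ‖S.y (j + 2) - S.yag (j + 2)‖) ^ 2 ≤ S.residual j xh yh ∧
      2 * S.τ j * (1 + S.θ j - S.θ (j + 1) ^ 2) * primalGap g K xh yh (S.x j)
        ≤ S.residual j xh yh := by
  have hβ := inv_pos.2 S.β_pos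
  have hx := mul_nonneg S.one_sub_a_pos.le (sq_nonneg (S.θ (j + 1) * ‖S.x (j + 1) - S.x j‖))
  have hxbar := mul_nonneg S.extrapolation_coeff_pos.le (sq_nonneg ‖S.x (j + 2) - S.xbar (j + 1)‖)
  have hxag := mul_nonneg S.one_sub_a_pos.le
    (sq_nonneg (S.a (j + 3) * ‖S.x (j + 2) - S.xag (j + 2)‖))
  have hy := mul_nonneg (mul_nonneg hβ.le S.one_sub_δ_sub_b_pos.le)
    (sq_nonneg ‖S.y (j + 2) - S.y (j + 1)‖)
  have hyag := mul_nonneg hβ.le (sq_nonneg (S.b (j + 2) * ‖S.y (j + 2) - S.yag (j + 2)‖))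
  have hgap := mul_nonneg (S.two_mul_primalGap_nonneg j hs) (sub_nonneg.2 (S.θ_succ_sq_le j))
  unfold residual
  refine ⟨?_, ?_, ?_, ?_, ?_, ?_⟩ <;> linarith

theorem residual_nonneg (hs : IsSaddlePoint g h K xh yh) : 0 ≤ S.residual j xh yh :=
  (mul_nonneg S.one_sub_a_pos.le (sq_nonneg _)).trans (S.terms_le_residual j hs).1

theorem residual_le :
    S.residual j xh yh ≤
      (1 - S.a (j + 1)) * (S.θ (j + 1) * ‖S.x (j + 1) - S.x j‖) ^ 2
        + (1 - S.δ - S.θmax ^ 2 * S.a (j + 1) - S.a (j + 1)) * ‖S.x (j + 2) - S.xbar (j + 1)‖ ^ 2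
        + S.a (j + 3) * (1 - S.a (j + 3)) * ‖S.x (j + 2) - S.xag (j + 2)‖ ^ 2
        + S.β⁻¹ * (1 - S.δ - S.b (j + 2)) * ‖S.y (j + 2) - S.y (j + 1)‖ ^ 2
        + S.β⁻¹ * ((S.b (j + 2) + S.b (j + 3) * (1 - S.b (j + 3)))
          * ‖S.y (j + 2) - S.yag (j + 2)‖ ^ 2)
        + 2 * S.τ j * (1 + S.θ j - S.θ (j + 1) ^ 2) * primalGap g K xh yh (S.x j) := by
  have hβ := S.β_pos
  have ha₁ := S.antitone_a (Nat.zero_le (j + 1))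
  have ha₃ := S.antitone_a (Nat.zero_le (j + 3))
  have hb₂ := S.antitone_b (Nat.zero_le (j + 2))
  have hxag : (1 - S.a 0) * S.a (j + 3) ^ 2 ≤ S.a (j + 3) * (1 - S.a (j + 3)) := by
    have hsq : S.a (j + 3) ^ 2 ≤ S.a (j + 3) := by
      nlinarith [(S.a_mem (j + 3)).1, (S.a_mem (j + 3)).2]
    nlinarith [mul_le_mul_of_nonneg_left hsq S.one_sub_a_pos.le, (S.a_mem (j + 3)).1]
  have hyag : S.b (j + 2) ^ 2 ≤ S.b (j + 2) + S.b (j + 3) * (1 - S.b (j + 3)) := by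
    nlinarith [(S.b_mem (j + 2)).1, (S.b_mem (j + 2)).2, (S.b_mem (j + 3)).1, (S.b_mem (j + 3)).2]
  rw [residual, mul_pow (S.a _), mul_pow (S.b _), ← mul_assoc (1 - S.a 0)]
  gcongr

theorem energy_succ_add_residual_le (hs : IsSaddlePoint g h K xh yh) :
    S.energy (j + 1) xh yh + S.residual j xh yh ≤
      (1 + ((S.a (j + 2) + S.b (j + 2)) - (S.a (j + 3) + S.b (j + 3)))) * S.energy j xh yh := by
  have hβ := inv_pos.2 S.β_pos
  have hgap := S.primalGap_step_le j hs
  have hx := aggDistSq_step_le (S.a_mem (j + 2)).2.le (S.antitone_a (Nat.le_succ (j + 2)))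
    (S.x (j + 2)) (S.x (j + 1)) (S.xag (j + 2)) xh
  have hy := mul_le_mul_of_nonneg_left (aggDistSq_step_le (S.b_mem (j + 2)).2.le
    (S.antitone_b (Nat.le_succ (j + 2))) (S.y (j + 2)) (S.y (j + 1)) (S.yag (j + 2)) yh) hβ.le
  have hextra := two_mul_inner_extrapolation_le (S.a_mem (j + 1)).1 (S.θ_pos (j + 1)).le
    (S.θ_le (j + 1)) (S.x j) (S.x (j + 1)) (S.x (j + 2)) (S.xag (j + 1))
  rw [← S.xmd_succ (j + 1), ← S.xag_succ (j + 2)] at hx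
  rw [← S.ymd_succ j, ← S.yag_succ (j + 1)] at hy
  rw [← S.xmd_succ j, ← S.xbar_succ j] at hextra
  have hres := S.residual_le j (xh := xh) (yh := yh)
  have hxdiff := mul_nonneg (sub_nonneg.2 (S.antitone_a (Nat.le_succ (j + 1))))
    (sq_nonneg ‖S.x (j + 2) - S.x (j + 1)‖)
  have hx_le := mul_le_mul_of_nonneg_left (S.terms_le_energy j hs).1
    (sub_nonneg.2 (S.antitone_a (Nat.le_succ (j + 2))))
  have hy_le := mul_le_mul_of_nonneg_left (S.terms_le_energy j hs).2
    (sub_nonneg.2 (S.antitone_b (Nat.le_succ (j + 2))))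
  simp only [energy, S.τ_succ, add_assoc, Nat.reduceAdd] at *
  linarith

/-! ### Asymptotic regularity -/

theorem exists_tendsto_energy_and_tendsto_residual (hs : IsSaddlePoint g h K xh yh) :
    (∃ l, Tendsto (fun k => S.energy k xh yh) atTop (𝓝 l)) ∧
      Tendsto (fun k => S.residual k xh yh) atTop (𝓝 0) := by
  have hanti : Antitone fun k => S.a (k + 2) + S.b (k + 2) := fun i k hik =>
    add_le_add (S.antitone_a (by lia)) (S.antitone_b (by lia))
  exact tendsto_of_quasiFejer (fun k => S.energy_nonneg k hs) (fun k => S.residual_nonneg k hs)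
    (fun k => add_nonneg (S.a_mem _).1 (S.b_mem _).1) hanti
    (fun k => S.energy_succ_add_residual_le k hs)

theorem tendsto_x_sub_xbar (hs : IsSaddlePoint g h K xh yh) :
    Tendsto (fun k => S.x (k + 2) - S.xbar (k + 1)) atTop (𝓝 0) :=
  tendsto_zero_iff_norm_tendsto_zero.2 <| tendsto_zero_of_mul_sq_le S.extrapolation_coeff_pos
    (fun k => (S.terms_le_residual k hs).2.1) (S.exists_tendsto_energy_and_tendsto_residual hs).2

theorem tendsto_x_succ_sub (hs : IsSaddlePoint g h K xh yh) :
    Tendsto (fun k => S.x (k + 2) - S.x (k + 1)) atTop (𝓝 0) := by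
  have hinertia : Tendsto (fun k => S.θ (k + 1) • (S.x (k + 1) - S.x k)) atTop (𝓝 0) := by
    refine tendsto_zero_iff_norm_tendsto_zero.2 <| tendsto_zero_of_mul_sq_le S.one_sub_a_pos
      (fun k => ?_) (S.exists_tendsto_energy_and_tendsto_residual hs).2
    rw [norm_smul, Real.norm_of_nonneg (S.θ_pos _).le]
    exact (S.terms_le_residual k hs).1
  have hsum := (S.tendsto_x_sub_xbar hs).add hinertia
  rw [add_zero] at hsum
  refine hsum.congr fun k => ?_
  rw [S.xbar_succ]
  abel

theorem tendsto_x_sub_xmd (hs : IsSaddlePoint g h K xh yh) :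
    Tendsto (fun k => S.x (k + 1) - S.xmd (k + 1)) atTop (𝓝 0) := by
  have hxag : Tendsto (fun k => S.a (k + 3) • (S.x (k + 2) - S.xag (k + 2))) atTop (𝓝 0) := by
    refine tendsto_zero_iff_norm_tendsto_zero.2 <| tendsto_zero_of_mul_sq_le S.one_sub_a_pos
      (fun k => ?_) (S.exists_tendsto_energy_and_tendsto_residual hs).2
    rw [norm_smul, Real.norm_of_nonneg (S.a_mem _).1]
    exact (S.terms_le_residual k hs).2.2.1
  obtain ⟨A, -, hA⟩ := exists_tendsto_of_antitone_of_mem_Ico S.antitone_a S.a_mem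
  have hsum := ((tendsto_add_atTop_iff_nat 1).2 (S.tendsto_x_succ_sub hs)).add
    ((((tendsto_add_atTop_iff_nat 3).2 hA).const_sub 1).smul hxag)
  rw [smul_zero, add_zero] at hsum
  rw [← tendsto_add_atTop_iff_nat 2]
  refine hsum.congr fun k => ?_
  rw [S.xmd_succ, S.xag_succ (k + 2)]
  module

theorem tendsto_y_succ_sub (hs : IsSaddlePoint g h K xh yh) :
    Tendsto (fun k => S.y (k + 2) - S.y (k + 1)) atTop (𝓝 0) :=
  tendsto_zero_iff_norm_tendsto_zero.2 <|
    tendsto_zero_of_mul_sq_le (mul_pos (inv_pos.2 S.β_pos) S.one_sub_δ_sub_b_pos)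
      (fun k => (S.terms_le_residual k hs).2.2.2.1)
      (S.exists_tendsto_energy_and_tendsto_residual hs).2

theorem tendsto_y_sub_ymd (hs : IsSaddlePoint g h K xh yh) :
    Tendsto (fun k => S.y (k + 2) - S.ymd (k + 2)) atTop (𝓝 0) := by
  have hyag : Tendsto (fun k => S.b (k + 2) • (S.y (k + 2) - S.yag (k + 2))) atTop (𝓝 0) := by
    refine tendsto_zero_iff_norm_tendsto_zero.2 <| tendsto_zero_of_mul_sq_le (inv_pos.2 S.β_pos)
      (fun k => ?_) (S.exists_tendsto_energy_and_tendsto_residual hs).2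
    rw [norm_smul, Real.norm_of_nonneg (S.b_mem _).1]
    exact (S.terms_le_residual k hs).2.2.2.2.1
  obtain ⟨B, -, hB⟩ := exists_tendsto_of_antitone_of_mem_Ico S.antitone_b S.b_mem
  have hsum := ((((tendsto_add_atTop_iff_nat 2).2 hB).const_sub 1).smul
    (S.tendsto_y_succ_sub hs)).add hyag
  rw [smul_zero, add_zero] at hsum
  refine hsum.congr fun k => ?_
  rw [S.ymd_succ]
  module

theorem isBounded_range_x (hs : IsSaddlePoint g h K xh yh) :
    Bornology.IsBounded (Set.range fun k => S.x (k + 1)) := by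
  obtain ⟨l, hl⟩ := (S.exists_tendsto_energy_and_tendsto_residual hs).1
  exact isBounded_range_of_bddAbove_aggDistSq (fun k => S.antitone_a (Nat.zero_le (k + 2)))
    (S.a_mem 0).2 (hl.bddAbove_range.range_mono _ fun k => (S.terms_le_energy k hs).1)

theorem isBounded_range_y (hs : IsSaddlePoint g h K xh yh) :
    Bornology.IsBounded (Set.range fun k => S.y (k + 1)) := by
  obtain ⟨l, hl⟩ := (S.exists_tendsto_energy_and_tendsto_residual hs).1
  exact isBounded_range_of_bddAbove_aggDistSq (fun k => S.antitone_b (Nat.zero_le (k + 2)))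
    (S.b_mem 0).2 ((hl.const_mul S.β).bddAbove_range.range_mono _ fun k =>
      (inv_mul_le_iff₀ S.β_pos).1 (S.terms_le_energy k hs).2)

/-! ### Uniqueness of cluster points -/

theorem exists_tendsto_aggDistSq_sub_x {p q : X} {r : Y} (hp : IsSaddlePoint g h K p r)
    (hq : IsSaddlePoint g h K q r) :
    ∃ L, Tendsto (fun k => aggDistSq (S.a (k + 2)) (S.x (k + 1)) (S.xag (k + 2)) p
      - aggDistSq (S.a (k + 2)) (S.x (k + 1)) (S.xag (k + 2)) q) atTop (𝓝 L) := by
  obtain ⟨lp, hlp⟩ := (S.exists_tendsto_energy_and_tendsto_residual hp).1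
  obtain ⟨lq, hlq⟩ := (S.exists_tendsto_energy_and_tendsto_residual hq).1
  refine ⟨lp - lq, (hlp.sub hlq).congr fun k => ?_⟩
  rw [energy, energy, hp.primalGap_eq hq]
  ring

theorem eq_of_mapClusterPt_x {p q : X} {r : Y} (hp : IsSaddlePoint g h K p r)
    (hq : IsSaddlePoint g h K q r) (hxp : MapClusterPt p atTop fun k => S.x (k + 1))
    (hxq : MapClusterPt q atTop fun k => S.x (k + 1)) : p = q := by
  obtain ⟨L, hL⟩ := S.exists_tendsto_aggDistSq_sub_x hp hq
  obtain ⟨A, hA, haA⟩ := exists_tendsto_of_antitone_of_mem_Ico S.antitone_a S.a_mem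
  have hconst : AsymptoticallyConstantBetween Set.univ fun k => S.x (k + 1) := by
    refine .univ ?_
    simp_rw [dist_eq_norm]
    exact (S.tendsto_x_succ_sub hp).norm.trans (by rw [norm_zero])
  exact eq_of_mapClusterPt_of_tendsto_aggDistSq_sub (v := fun k => S.xag (k + 1))
    (fun k => Set.Ico_subset_Icc_self (S.a_mem (k + 2))) ((tendsto_add_atTop_iff_nat 2).2 haA) hA
    (fun k => S.xag_succ (k + 1)) (S.isBounded_range_x hp)
    (Frequently.of_forall fun k => Set.mem_univ k) hconst (hL.mono_left inf_le_left) hxp hxq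

theorem exists_tendsto_aggDistSq_sub_y {l : Filter ℕ} {p : X} {r s : Y}
    (hr : IsSaddlePoint g h K p r) (hs : IsSaddlePoint g h K p s) (hl : l ≤ atTop)
    (hgap : Tendsto (fun k => 2 * S.τ k * (1 + S.θ k)
      * (primalGap g K p r (S.x k) - primalGap g K p s (S.x k))) l (𝓝 0)) :
    ∃ L, Tendsto (fun k => aggDistSq (S.b (k + 2)) (S.y (k + 1)) (S.yag (k + 2)) r
      - aggDistSq (S.b (k + 2)) (S.y (k + 1)) (S.yag (k + 2)) s) l (𝓝 L) := by
  obtain ⟨lr, hlr⟩ := (S.exists_tendsto_energy_and_tendsto_residual hr).1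
  obtain ⟨ls, hls⟩ := (S.exists_tendsto_energy_and_tendsto_residual hs).1
  refine ⟨_, ((((hlr.sub hls).mono_left hl).sub hgap).const_mul S.β).congr fun k => ?_⟩
  rw [← mul_right_inj' (inv_pos.2 S.β_pos).ne', inv_mul_cancel_left₀ S.β_pos.ne', energy, energy]
  ring

theorem eq_of_mapClusterPt_y {G : Set ℕ} {p : X} {r s : Y}
    (hr : IsSaddlePoint g h K p r) (hs : IsSaddlePoint g h K p s) (hG : ∃ᶠ k in atTop, k ∈ G)
    (hconst : AsymptoticallyConstantBetween G fun k => S.y (k + 1))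
    (hgap : Tendsto (fun k => 2 * S.τ k * (1 + S.θ k)
      * (primalGap g K p r (S.x k) - primalGap g K p s (S.x k))) (atTop ⊓ 𝓟 G) (𝓝 0))
    (hyr : MapClusterPt r atTop fun k => S.y (k + 1))
    (hys : MapClusterPt s atTop fun k => S.y (k + 1)) : r = s := by
  obtain ⟨L, hL⟩ := S.exists_tendsto_aggDistSq_sub_y hr hs inf_le_left hgap
  obtain ⟨B, hB, hbB⟩ := exists_tendsto_of_antitone_of_mem_Ico S.antitone_b S.b_mem
  exact eq_of_mapClusterPt_of_tendsto_aggDistSq_sub (v := fun k => S.yag (k + 1))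
    (fun k => Set.Ico_subset_Icc_self (S.b_mem (k + 2))) ((tendsto_add_atTop_iff_nat 2).2 hbB) hB
    S.yag_succ (S.isBounded_range_y hr) hG hconst hL hyr hys

theorem eq_of_mapClusterPt_y_of_adjoint_eq {p : X} {r s : Y}
    (hr : IsSaddlePoint g h K p r) (hs : IsSaddlePoint g h K p s)
    (hyr : MapClusterPt r atTop fun k => S.y (k + 1))
    (hys : MapClusterPt s atTop fun k => S.y (k + 1)) (hrs : adjoint K r = adjoint K s) :
    r = s := by
  have hgap : ∀ z, primalGap g K p r z - primalGap g K p s z = 0 := fun z => by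
    rw [primalGap, primalGap, ← ContinuousLinearMap.adjoint_inner_right,
      ← ContinuousLinearMap.adjoint_inner_right, hrs, sub_self]
  have hconst : AsymptoticallyConstantBetween Set.univ fun k => S.y (k + 1) := by
    refine .univ ?_
    simp_rw [dist_eq_norm]
    exact (S.tendsto_y_succ_sub hr).norm.trans (by rw [norm_zero])
  refine S.eq_of_mapClusterPt_y hr hs (Frequently.of_forall fun k => Set.mem_univ k) hconst ?_
    hyr hys
  simp only [hgap, mul_zero, tendsto_const_nhds]

/-- The steps at which the stepsize ratio stays far enough below the growth bound
`θ (k + 1) ^ 2 ≤ 1 + θ k` for the residual to control the weighted gap in the energy. -/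
def goodSteps : Set ℕ := {k | S.θ (k + 1) ^ 2 ≤ 1 / 2 + S.θ k}

/-- A bounded quantity that decreases by at least `(τ k)⁻¹` whenever `k` is not a good step. -/
noncomputable def stepPotential (k : ℕ) : ℝ :=
  2 * (1 / 2 + S.θmax) ^ 2 * (S.τ k * (1 / 2 + S.θ k))⁻¹

theorem tendsto_gap_goodSteps (hs : IsSaddlePoint g h K xh yh) :
    Tendsto (fun k => 2 * S.τ k * (1 + S.θ k) * primalGap g K xh yh (S.x k))
      (atTop ⊓ 𝓟 S.goodSteps) (𝓝 0) := by
  have hres := ((S.exists_tendsto_energy_and_tendsto_residual hs).2.mono_left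
    (inf_le_left : atTop ⊓ 𝓟 S.goodSteps ≤ atTop)).const_mul (2 * (1 + S.θmax))
  rw [mul_zero] at hres
  refine tendsto_of_tendsto_of_tendsto_of_le_of_le' tendsto_const_nhds hres
    (Eventually.of_forall fun k => ?_) ?_
  · rw [mul_right_comm]
    exact mul_nonneg (S.two_mul_primalGap_nonneg k hs) (add_pos one_pos (S.θ_pos k)).le
  · filter_upwards [mem_inf_of_right (mem_principal_self _)] with k hk
    have hratio : S.θ (k + 1) ^ 2 ≤ 1 / 2 + S.θ k := hk
    have hgood : 1 / 2 ≤ 1 + S.θ k - S.θ (k + 1) ^ 2 := by linarith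
    have hpos := S.two_mul_primalGap_nonneg k hs
    have hθmax := S.θmax_pos
    have hmax : 1 + S.θ k ≤ 1 + S.θmax := by gcongr; exact S.θ_le k
    calc 2 * S.τ k * (1 + S.θ k) * primalGap g K xh yh (S.x k)
        = 2 * (1 + S.θ k) * (2 * S.τ k * primalGap g K xh yh (S.x k) * (1 / 2)) := by ring
      _ ≤ 2 * (1 + S.θmax) * (2 * S.τ k * primalGap g K xh yh (S.x k)
          * (1 + S.θ k - S.θ (k + 1) ^ 2)) := by gcongr
      _ ≤ 2 * (1 + S.θmax) * S.residual k xh yh := by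
          rw [mul_right_comm (2 * S.τ k)]
          gcongr
          exact (S.terms_le_residual k hs).2.2.2.2.2

theorem stepPotential_mem_Icc (k : ℕ) :
    S.stepPotential k ∈ Set.Icc 0 (2 * (1 / 2 + S.θmax) ^ 2 * (S.τmin * (1 / 2))⁻¹) := by
  have hτ := S.τ_pos k
  have hθ := S.θ_pos k
  have hτmin := S.τmin_pos
  have hle : S.τmin * (1 / 2) ≤ S.τ k * (1 / 2 + S.θ k) := by
    gcongr
    · exact S.τmin_le k
    · linarith
  unfold stepPotential
  exact ⟨by positivity, by gcongr⟩

theorem inv_τ_le_stepPotential_sub {k : ℕ} (hk : k ∉ S.goodSteps) :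
    (S.τ k)⁻¹ ≤ S.stepPotential k - S.stepPotential (k + 1) := by
  have hbad : 1 / 2 + S.θ k < S.θ (k + 1) ^ 2 := not_le.1 hk
  have ht := S.τ_pos k
  have hp := S.θ_pos k
  have hq := S.θ_pos (k + 1)
  have hweights : (1 / 2 + S.θ k) * (1 / 2 + S.θ (k + 1)) ≤ (1 / 2 + S.θmax) ^ 2 := by
    have hθmax := S.θmax_pos
    rw [sq]
    gcongr <;> exact S.θ_le _
  rw [stepPotential, stepPotential, S.τ_succ k, ← mul_sub, inv_sub_inv (by positivity)
    (by positivity), inv_eq_one_div, ← mul_div_assoc, div_le_div_iff₀ ht (by positivity)]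
  generalize S.θ k = p at *
  generalize S.θ (k + 1) = q at *
  generalize S.τ k = t at *
  calc 1 * (t * (1 / 2 + p) * (q * t * (1 / 2 + q)))
      = (1 / 2 + p) * (1 / 2 + q) * (q * t * t) := by ring
    _ ≤ (1 / 2 + S.θmax) ^ 2 * (q * t * t) := by gcongr
    _ = 2 * (1 / 2 + S.θmax) ^ 2 * (t * (q / 2)) * t := by ring
    _ ≤ 2 * (1 / 2 + S.θmax) ^ 2 * (q * t * (1 / 2 + q) - t * (1 / 2 + p)) * t := by
        gcongr
        nlinarith

theorem asymptoticallyConstantBetween_adjoint_y (hs : IsSaddlePoint g h K xh yh) :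
    AsymptoticallyConstantBetween S.goodSteps fun k => adjoint K (S.y (k + 1)) := by
  have hsmall : Tendsto (fun k => S.δ / √S.β * ‖S.y (k + 2) - S.y (k + 1)‖) atTop (𝓝 0) := by
    simpa using (S.tendsto_y_succ_sub hs).norm.const_mul (S.δ / √S.β)
  have hinv : ∀ k, (S.τ (k + 1))⁻¹ ∈ Set.Icc 0 S.τmin⁻¹ := fun k =>
    ⟨(inv_pos.2 (S.τ_pos _)).le, inv_anti₀ S.τmin_pos (S.τmin_le _)⟩
  refine .of_telescoping (fun k => ?_) hsmall hinv (fun k => S.stepPotential_mem_Icc (k + 1))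
    fun k hk => S.inv_τ_le_stepPotential_sub hk
  have hβ := Real.sqrt_pos.2 S.β_pos
  have hτ := S.τ_pos (k + 1)
  rw [dist_eq_norm, ← map_sub, div_mul_eq_mul_div, ← div_eq_mul_inv, div_div,
    le_div_iff₀ (mul_pos hβ hτ), mul_comm]
  exact S.linesearch k

end General

section FiniteDimensional

variable {X Y : Type*}
  [NormedAddCommGroup X] [InnerProductSpace ℝ X] [FiniteDimensional ℝ X]
  [NormedAddCommGroup Y] [InnerProductSpace ℝ Y] [FiniteDimensional ℝ Y]
  {g : X → ℝ} {h : Y → ℝ} {K : X →L[ℝ] Y} (S : NPDALRun g h K) {xh : X} {yh : Y}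

/-! ### Convergence in finite dimensions -/

theorem isSaddlePoint_of_tendsto {l : Filter ℕ} [l.NeBot] {p : X} {r : Y}
    (hs : IsSaddlePoint g h K xh yh) (hl : l ≤ atTop)
    (hx : Tendsto (fun k => S.x (k + 1)) l (𝓝 p))
    (hy : Tendsto (fun k => S.y (k + 1)) l (𝓝 r)) : IsSaddlePoint g h K p r := by
  have hx₂ : Tendsto (fun k => S.x (k + 2)) l (𝓝 p) := by
    simpa using hx.add ((S.tendsto_x_succ_sub hs).mono_left hl)
  have hy₂ : Tendsto (fun k => S.y (k + 2)) l (𝓝 r) := by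
    simpa using hy.add ((S.tendsto_y_succ_sub hs).mono_left hl)
  have hxbar : Tendsto (fun k => S.xbar (k + 1)) l (𝓝 p) := by
    simpa using hx₂.sub ((S.tendsto_x_sub_xbar hs).mono_left hl)
  have hprimal := sub_le_inner_of_tendsto_of_isProx (t := fun k => S.τ k)
    (md := fun k => S.xmd (k + 1)) (ξ := fun k => -adjoint K (S.y (k + 1)))
    S.convexOn_g S.convexOn_g.locallyLipschitz.continuous S.τmin_pos (fun k => S.τmin_le _)
    (fun k => by simpa only [smul_neg, ← sub_eq_add_neg] using S.isProx_x k) hx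
    (((adjoint K).continuous.tendsto r).comp hy).neg ((S.tendsto_x_sub_xmd hs).mono_left hl)
  have hdual := sub_le_inner_of_tendsto_of_isProx (t := fun k => S.β * S.τ (k + 1))
    (md := fun k => S.ymd (k + 2)) (ξ := fun k => K (S.xbar (k + 1)))
    S.convexOn_h S.convexOn_h.locallyLipschitz.continuous (mul_pos S.β_pos S.τmin_pos)
    (fun k => mul_le_mul_of_nonneg_left (S.τmin_le _) S.β_pos.le)
    (fun k => S.isProx_y k) hy₂ ((K.continuous.tendsto p).comp hxbar)
    ((S.tendsto_y_sub_ymd hs).mono_left hl)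
  refine fun x y => ⟨?_, ?_⟩
  · have := hdual y
    rw [inner_sub_right] at this
    linarith
  · have := hprimal x
    rw [inner_neg_left, inner_sub_right, ContinuousLinearMap.adjoint_inner_left,
      ContinuousLinearMap.adjoint_inner_left, real_inner_comm (K p), real_inner_comm (K x)] at this
    linarith

theorem exists_isSaddlePoint_of_mapClusterPt_x {p : X} (hs : IsSaddlePoint g h K xh yh)
    (hp : MapClusterPt p atTop fun k => S.x (k + 1)) : ∃ r, IsSaddlePoint g h K p r := by
  obtain ⟨U, r, hU, hx, hy⟩ :=
    exists_ultrafilter_tendsto_of_mapClusterPt hp (S.isBounded_range_y hs)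
  exact ⟨r, S.isSaddlePoint_of_tendsto hs hU hx hy⟩

theorem isSaddlePoint_of_mapClusterPt_y {p : X} {r : Y} (hs : IsSaddlePoint g h K xh yh)
    (hx : Tendsto (fun k => S.x (k + 1)) atTop (𝓝 p))
    (hr : MapClusterPt r atTop fun k => S.y (k + 1)) : IsSaddlePoint g h K p r := by
  obtain ⟨U, hU, hy⟩ := mapClusterPt_iff_ultrafilter.1 hr
  exact S.isSaddlePoint_of_tendsto hs hU (hx.mono_left hU) hy

theorem exists_tendsto_x (hs : IsSaddlePoint g h K xh yh) :
    ∃ p, Tendsto (fun k => S.x (k + 1)) atTop (𝓝 p) := by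
  refine exists_tendsto_of_mapClusterPt_unique (S.isBounded_range_x hs) fun p q hxp hxq => ?_
  obtain ⟨r, hpr⟩ := S.exists_isSaddlePoint_of_mapClusterPt_x hs hxp
  obtain ⟨s, hqs⟩ := S.exists_isSaddlePoint_of_mapClusterPt_x hs hxq
  exact S.eq_of_mapClusterPt_x hpr (hpr.exchange hqs) hxp hxq

theorem asymptoticallyConstantBetween_y {p : X} (hs : IsSaddlePoint g h K xh yh)
    (hx : Tendsto (fun k => S.x (k + 1)) atTop (𝓝 p)) :
    AsymptoticallyConstantBetween S.goodSteps fun k => S.y (k + 1) :=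
  .of_comp (S.isBounded_range_y hs) (adjoint K).continuous
    (S.asymptoticallyConstantBetween_adjoint_y hs) fun _ hr _ hr' =>
      S.eq_of_mapClusterPt_y_of_adjoint_eq (S.isSaddlePoint_of_mapClusterPt_y hs hx hr)
        (S.isSaddlePoint_of_mapClusterPt_y hs hx hr') hr hr'

theorem exists_tendsto_y {p : X} (hs : IsSaddlePoint g h K xh yh)
    (hx : Tendsto (fun k => S.x (k + 1)) atTop (𝓝 p)) :
    ∃ r, Tendsto (fun k => S.y (k + 1)) atTop (𝓝 r) := by
  have hconst := S.asymptoticallyConstantBetween_y hs hx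
  by_cases hG : ∃ᶠ k in atTop, k ∈ S.goodSteps
  · refine exists_tendsto_of_mapClusterPt_unique (S.isBounded_range_y hs) fun r s hyr hys => ?_
    have hpr := S.isSaddlePoint_of_mapClusterPt_y hs hx hyr
    have hps := S.isSaddlePoint_of_mapClusterPt_y hs hx hys
    have hgap := (S.tendsto_gap_goodSteps hpr).sub (S.tendsto_gap_goodSteps hps)
    simp_rw [← mul_sub, sub_self] at hgap
    exact S.eq_of_mapClusterPt_y hpr hps hG hconst hgap hyr hys
  · exact cauchySeq_tendsto_of_complete (hconst.cauchySeq hG)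

end FiniteDimensional

end NPDALRun

theorem npdal_global_convergence_general {X Y : Type*}
    [NormedAddCommGroup X] [InnerProductSpace ℝ X] [FiniteDimensional ℝ X]
    [NormedAddCommGroup Y] [InnerProductSpace ℝ Y] [FiniteDimensional ℝ Y]
    {g : X → ℝ} {h : Y → ℝ} {K : X →L[ℝ] Y} (S : NPDALRun g h K)
    (hexists : ∃ xh yh, IsSaddlePoint g h K xh yh) :
    ∃ xs ys, IsSaddlePoint g h K xs ys ∧ Tendsto S.x atTop (𝓝 xs) ∧ Tendsto S.y atTop (𝓝 ys) := by
  obtain ⟨xh, yh, hs⟩ := hexists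
  obtain ⟨xs, hx⟩ := S.exists_tendsto_x hs
  obtain ⟨ys, hy⟩ := S.exists_tendsto_y hs hx
  exact ⟨xs, ys, S.isSaddlePoint_of_tendsto hs le_rfl hx hy,
    (tendsto_add_atTop_iff_nat 1).1 hx, (tendsto_add_atTop_iff_nat 1).1 hy⟩

/-- **Theorem 3.5 (global convergence of NPDAL).** If the saddle problem admits a
saddle point, then the NPDAL iterates `(x_k, y_k)` converge to a saddle point. -/
theorem npdal_global_convergence
    {X Y : Type*}
    [NormedAddCommGroup X] [InnerProductSpace ℝ X] [FiniteDimensional ℝ X]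
    [NormedAddCommGroup Y] [InnerProductSpace ℝ Y] [FiniteDimensional ℝ Y]
    (g : X → ℝ) (h : Y → ℝ) (K : X →L[ℝ] Y)
    (hg : ConvexOn ℝ Set.univ g) (hgc : Continuous g)
    (hh : ConvexOn ℝ Set.univ h) (hhc : Continuous h)
    -- NPDAL parameters
    (a b : ℕ → ℝ) (ha : ∀ k, a k ∈ Set.Ioo (0 : ℝ) 1) (hb : ∀ k, b k ∈ Set.Ioo (0 : ℝ) 1)
    (haanti : Antitone a) (hbanti : Antitone b)
    (β μ δ θ : ℝ) (hβ : 0 < β) (hμ : μ ∈ Set.Ioo (0 : ℝ) 1) (hδ : δ ∈ Set.Ioo (0 : ℝ) 1)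
    (hθ : 0 < θ)
    (hconda : ∀ k, δ + θ ^ 2 * a k + a k < 1) (hcondb : ∀ k, δ + b k < 1)
    -- linesearch stepsizes and extrapolation parameters
    (τs θs : ℕ → ℝ) (hτpos : ∀ k, 0 < τs k) (hθ0 : θs 0 = 1)
    (hθs : ∀ k, θs (k + 1) = τs (k + 1) / τs k)
    (hτub : ∀ k, τs (k + 1) ≤ τs k * Real.sqrt (1 + θs k))
    (hθub : ∀ k, θs k ≤ θ)
    (τlow : ℝ) (hτlow : 0 < τlow) (hτlb : ∀ k, τlow ≤ τs k)
    -- NPDAL iterates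
    (x xag xmd xbar : ℕ → X) (y yag ymd : ℕ → Y)
    (hxag0 : xag 0 = x 0) (hyag1 : yag 1 = y 1)
    (hxag : ∀ k, xag (k + 1) = (1 - a (k + 1)) • xag k + a (k + 1) • x k)
    (hxmd : ∀ k, xmd (k + 1) = (1 - a (k + 1)) • x k + a (k + 1) • xag (k + 1))
    (hx : ∀ k, IsProx (τs k) g
      (xmd (k + 1) - τs k • (ContinuousLinearMap.adjoint K) (y (k + 1))) (x (k + 1)))
    (hxbar : ∀ k, xbar (k + 1) = x (k + 1) + θs (k + 1) • (x (k + 1) - x k))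
    (hyag : ∀ k, yag (k + 2) = (1 - b (k + 2)) • yag (k + 1) + b (k + 2) • y (k + 1))
    (hymd : ∀ k, ymd (k + 2) = (1 - b (k + 2)) • y (k + 1) + b (k + 2) • yag (k + 2))
    (hy : ∀ k, IsProx (β * τs (k + 1)) h
      (ymd (k + 2) + (β * τs (k + 1)) • K (xbar (k + 1))) (y (k + 2)))
    -- linesearch acceptance condition
    (hls : ∀ k, Real.sqrt β * τs (k + 1) *
        ‖(ContinuousLinearMap.adjoint K) (y (k + 2) - y (k + 1))‖ ≤
      δ * ‖y (k + 2) - y (k + 1)‖)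
    (hexists : ∃ xh : X, ∃ yh : Y, IsSaddlePoint g h K xh yh) :
    ∃ xs : X, ∃ ys : Y, IsSaddlePoint g h K xs ys ∧
      Filter.Tendsto x Filter.atTop (nhds xs) ∧
      Filter.Tendsto y Filter.atTop (nhds ys) := by
  exact npdal_global_convergence_general
    ⟨a, b, τs, θs, β, δ, θ, τlow, x, xag, xmd, xbar, y, yag, ymd, hg, hh,
      fun k => Set.Ioo_subset_Ico_self (ha k), fun k => Set.Ioo_subset_Ico_self (hb k),
      haanti, hbanti, hβ, hδ.1.le, hconda 0, hcondb 0, hθ0 ▸ one_pos, hθs, hτub, hθub, hτlow, hτlb,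
      hxag, hxmd, hx, hxbar, hyag, hymd, hy, hls⟩ hexists
end
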